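/- Let P_1, ..., P_n be n-dimensional lattice polytopes in R^n. Then the number of interior lattice points of the Minkowski sum P_1 + ... + P_n is at least MV(P_1,...,P_n) - 1. (Soprunov's lower bound theorem.) -/

import Mathlib

open scoped Pointwise
open MeasureTheory Finset

def IsLatticePt {n : ℕ} (x : Fin n → ℝ) : Prop := ∀ i, ∃ z : ℤ, x i = (z : ℝ)

def IsLatticePolytope {n : ℕ} (P : Set (Fin n → ℝ)) : Prop :=
  ∃ V : Finset (Fin n → ℝ), V.Nonempty ∧ (∀ v ∈ V, IsLatticePt v) ∧
    P = convexHull ℝ (V : Set (Fin n → ℝ))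

noncomputable def adim {n : ℕ} (A : Set (Fin n → ℝ)) : ℕ :=
  Module.finrank ℝ (affineSpan ℝ A).direction

def relintLat {n : ℕ} (A : Set (Fin n → ℝ)) : Set (Fin n → ℝ) :=
  {x ∈ intrinsicInterior ℝ A | IsLatticePt x}

def intLat {n : ℕ} (A : Set (Fin n → ℝ)) : Set (Fin n → ℝ) :=
  {x ∈ interior A | IsLatticePt x}

noncomputable def mixedVol {n m : ℕ} (P : Fin m → Set (Fin n → ℝ)) : ℝ :=
  ∑ I : Finset (Fin m), (-1 : ℝ) ^ (m - I.card) * (volume (∑ i ∈ I, P i)).toReal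

/-!
Lift the vertices of each polytope to generic heights. The lower hulls of the lifts subdivide
`P₁ + ⋯ + Pₙ`, and the cells of this subdivision are dual to those of an arrangement of `n`
transversal tropical hypersurfaces. A crossing of all `n` hypersurfaces is dual to a parallelepiped
spanned by one edge of each `Pᵢ`, and the mixed volume is the total volume of these
parallelepipeds. The volume of a lattice parallelepiped is the number of lattice points which it has
modulo its edges, so the mixed volume counts pairs of a crossing and such a point.

Fix the fractional coordinates of the point, let `K` be the set of the colours whose coordinate is
nonzero, and fix the edges of these colours. The crossings concerned lie on a common intersection
`L` of hyperplanes, cut by the hypersurfaces of the remaining colours. Linear algebra over `𝔽₂`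
bounds their number by the number of bounded regions of `L`, plus one if `K = ∅`: the incidence
matrix of crossings and bounded regions has no kernel if `K ≠ ∅`, and a kernel of dimension at most
one if `K = ∅`. Each bounded region comes with a lattice point in the relative interior of its dual
cell, hence in the interior of the Minkowski sum, and no lattice point occurs twice.
-/

namespace Soprunov

open Filter Topology Module

section Arrangement

variable {ι X E : Type*} [NormedAddCommGroup E] [InnerProductSpace ℝ E]

/-- The label `x` is active for the colour `i` at `y` if the affine function `A i x` attains
`max_w A i w` there. The points at which two labels of colour `i` are active form the `i`-th
tropical hypersurface of the arrangement `A`. -/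
def IsActive (A : ι → X → E →ᵃ[ℝ] ℝ) (i : ι) (x : X) (y : E) : Prop :=
  ∀ w, A i w y ≤ A i x y

/-- The cell of a pattern `τ` in `D`: the points at which all labels of `τ` are active. -/
def cell (A : ι → X → E →ᵃ[ℝ] ℝ) (τ : ι → Set X) (D : Set E) : Set E :=
  {y ∈ D | ∀ i, ∀ x ∈ τ i, IsActive A i x y}

/-- The closed region of `D` on which `v i` is active for every colour `i ∈ J`. -/
def region (A : ι → X → E →ᵃ[ℝ] ℝ) (J : Finset ι) (D : Set E) (v : ι → X) : Set E :=
  {y ∈ D | ∀ i ∈ J, IsActive A i (v i) y}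

/-- The points of `D` lying on the tropical hypersurfaces of all colours in `J`. -/
def crossings (A : ι → X → E →ᵃ[ℝ] ℝ) (J : Finset ι) (D : Set E) : Set E :=
  {y ∈ D | ∀ i ∈ J, ∃ x x', x ≠ x' ∧ IsActive A i x y ∧ IsActive A i x' y}

/-- The hypersurfaces of the colours in `J` meet transversally at `y` inside `y + W`: a small
change of the heights of the active functions can be undone, up to a constant for each colour, by
moving `y` in a direction of `W`. -/
def IsTransverse (A : ι → X → E →ᵃ[ℝ] ℝ) (W : Submodule ℝ E) (J : Finset ι) (y : E) : Prop :=
  ∀ r : ι → X → ℝ, ∃ u ∈ W, ∃ s : ι → ℝ,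
    ∀ i ∈ J, ∀ x, IsActive A i x y → (A i x).linear u = r i x + s i

variable {A : ι → X → E →ᵃ[ℝ] ℝ} {J : Finset ι} {W : Submodule ℝ E} {D : Set E} {y : E}
  {i : ι} {x x' : X} {v v' : ι → X}

lemma affineMap_add_smul (f : E →ᵃ[ℝ] ℝ) (y u : E) (t : ℝ) :
    f (y + t • u) = f y + t * f.linear u := by
  rw [add_comm, ← vadd_eq_add, f.map_vadd, map_smul, smul_eq_mul, vadd_eq_add, add_comm]

lemma add_smul_mem_of_mem_direction {L : AffineSubspace ℝ E} {u : E} (hy : y ∈ L)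
    (hu : u ∈ L.direction) (t : ℝ) : y + t • u ∈ L := by
  simpa [add_comm] using AffineSubspace.vadd_mem_of_mem_direction (L.direction.smul_mem t hu) hy

lemma affineMap_linear_sub (f : E →ᵃ[ℝ] ℝ) (y y' : E) : f.linear (y - y') = f y - f y' :=
  f.linearMap_vsub y y'

lemma exists_isActive [Finite X] [Nonempty X] (A : ι → X → E →ᵃ[ℝ] ℝ) (i : ι) (y : E) :
    ∃ x, IsActive A i x y :=
  Finite.exists_max fun x => A i x y

lemma IsActive.eq (h : IsActive A i x y) (h' : IsActive A i x' y) : A i x y = A i x' y :=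
  le_antisymm (h' x) (h x')

lemma convex_setOf_isActive (A : ι → X → E →ᵃ[ℝ] ℝ) (i : ι) (x : X) :
    Convex ℝ {y | IsActive A i x y} := by
  simp only [IsActive, Set.ofPred_forall]
  refine convex_iInter fun w => ?_
  simpa [Set.preimage, sub_nonneg] using (convex_Ici (0 : ℝ)).affine_preimage (A i x - A i w)

lemma isClosed_setOf_isActive [FiniteDimensional ℝ E] (A : ι → X → E →ᵃ[ℝ] ℝ) (i : ι) (x : X) :
    IsClosed {y | IsActive A i x y} := by
  simp only [IsActive, Set.ofPred_forall]
  exact isClosed_iInter fun w => isClosed_le (A i w).continuous_of_finiteDimensional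
    (A i x).continuous_of_finiteDimensional

lemma IsActive.eventually_add_smul [Finite X] {u : E} (h : IsActive A i x y)
    (hu : ∀ w, IsActive A i w y → (A i w).linear u ≤ (A i x).linear u) :
    ∀ᶠ t in 𝓝[>] (0 : ℝ), IsActive A i x (y + t • u) := by
  refine eventually_all.2 fun w => ?_
  simp only [affineMap_add_smul]
  rcases (h w).lt_or_eq with hlt | heq
  · refine Eventually.filter_mono nhdsWithin_le_nhds (Eventually.mono ?_ fun _ => le_of_lt)
    refine ContinuousAt.eventually_lt ?_ ?_ (by simpa using hlt) <;> fun_prop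
  · have hw : IsActive A i w y := fun w' => heq ▸ h w'
    filter_upwards [self_mem_nhdsWithin] with t ht
    have := mul_le_mul_of_nonneg_left (hu w hw) (le_of_lt (Set.mem_Ioi.1 ht))
    linarith

lemma convex_cell (A : ι → X → E →ᵃ[ℝ] ℝ) (τ : ι → Set X) (hD : Convex ℝ D) :
    Convex ℝ (cell A τ D) := by
  simp only [cell, Set.ofPred_and, Set.ofPred_forall, Set.ofPred_mem_eq]
  exact hD.inter (convex_iInter fun i => convex_iInter₂ fun x _ => convex_setOf_isActive A i x)

lemma isClosed_cell [FiniteDimensional ℝ E] (A : ι → X → E →ᵃ[ℝ] ℝ) (τ : ι → Set X)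
    (hD : IsClosed D) : IsClosed (cell A τ D) := by
  simp only [cell, Set.ofPred_and, Set.ofPred_forall, Set.ofPred_mem_eq]
  exact hD.inter <| isClosed_iInter fun i => isClosed_biInter fun x _ =>
    isClosed_setOf_isActive A i x

lemma region_eq_cell (A : ι → X → E →ᵃ[ℝ] ℝ) (J : Finset ι) (D : Set E) (v : ι → X) :
    region A J D v = cell A (fun i => {x | i ∈ J ∧ x = v i}) D := by
  ext y
  simp only [region, cell, Set.mem_ofPred_eq, and_imp]
  exact and_congr_right fun _ => ⟨fun h i x hi hx => hx ▸ h i hi, fun h i hi => h i _ hi rfl⟩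

lemma convex_region (hD : Convex ℝ D) : Convex ℝ (region A J D v) := by
  rw [region_eq_cell]; exact convex_cell A _ hD

lemma isClosed_region [FiniteDimensional ℝ E] (hD : IsClosed D) : IsClosed (region A J D v) := by
  rw [region_eq_cell]; exact isClosed_cell A _ hD

lemma region_congr (h : ∀ i ∈ J, v i = v' i) : region A J D v = region A J D v' := by
  ext y
  exact and_congr_right fun _ => forall₂_congr fun i hi => by rw [h i hi]

lemma IsTransverse.anti {W' : Submodule ℝ E} {J' : Finset ι} {y' : E} (h : IsTransverse A W J y)
    (hW : W ≤ W') (hJ : J' ⊆ J) (hact : ∀ i ∈ J', ∀ x, IsActive A i x y' → IsActive A i x y) :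
    IsTransverse A W' J' y' := fun r =>
  let ⟨u, hu, s, hs⟩ := h r
  ⟨u, hW hu, s, fun i hi x hx => hs i (hJ hi) x (hact i hi x hx)⟩

end Arrangement

section LocalFrame

variable {ι X E : Type*} [NormedAddCommGroup E] [InnerProductSpace ℝ E]
  {A : ι → X → E →ᵃ[ℝ] ℝ} {J : Finset ι} {W : Submodule ℝ E} {D : Set E} {y : E}

/-- The function `u ↦ (A i (f i) - A i (g i)).linear u` for each colour `i`. -/
noncomputable def slopeDiff (A : ι → X → E →ᵃ[ℝ] ℝ) (f g : ι → X) (i : ι) : E →ₗ[ℝ] ℝ :=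
  (A i (f i)).linear - (A i (g i)).linear

/-- `f i` and `g i` are two distinct active labels of each colour `i ∈ J` at `y`. -/
def IsActivePair (A : ι → X → E →ᵃ[ℝ] ℝ) (J : Finset ι) (f g : ι → X) (y : E) : Prop :=
  ∀ i ∈ J, f i ≠ g i ∧ IsActive A i (f i) y ∧ IsActive A i (g i) y

variable {f g : ι → X}

lemma exists_isActivePair [Nonempty X] (hy : y ∈ crossings A J D) :
    ∃ f g, IsActivePair A J f g y := by
  have h (i : ι) : ∃ x x' : X, i ∈ J → x ≠ x' ∧ IsActive A i x y ∧ IsActive A i x' y := by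
    by_cases hi : i ∈ J
    · obtain ⟨x, x', hx⟩ := hy.2 i hi
      exact ⟨x, x', fun _ => hx⟩
    · exact ⟨Classical.arbitrary X, Classical.arbitrary X, fun h => absurd h hi⟩
  choose f g hfg using h
  exact ⟨f, g, hfg⟩

lemma IsActivePair.slopeDiff_sub (h : IsActivePair A J f g y) {i : ι} (hi : i ∈ J) (y' : E) :
    slopeDiff A f g i (y' - y) = A i (f i) y' - A i (g i) y' := by
  have := (h i hi).2.1.eq (h i hi).2.2
  rw [slopeDiff, LinearMap.sub_apply, affineMap_linear_sub, affineMap_linear_sub]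
  linarith

lemma IsTransverse.exists_slopeDiff_eq (hT : IsTransverse A W J y) (h : IsActivePair A J f g y)
    (c : ι → ℝ) : ∃ u ∈ W, ∀ i ∈ J, slopeDiff A f g i u = c i := by
  classical
  obtain ⟨u, hu, s, hs⟩ := hT fun i x => if x = f i then c i else 0
  refine ⟨u, hu, fun i hi => ?_⟩
  obtain ⟨hne, hf, hg⟩ := h i hi
  rw [slopeDiff, LinearMap.sub_apply, hs i hi _ hf, hs i hi _ hg]
  simp [hne.symm]

/-- The differences of slopes of the active pairs, as a map `W → ℝ^J`. -/
noncomputable def slopeDiffOn (A : ι → X → E →ᵃ[ℝ] ℝ) (W : Submodule ℝ E) (J : Finset ι)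
    (f g : ι → X) : W →ₗ[ℝ] J → ℝ :=
  LinearMap.pi fun i => slopeDiff A f g i ∘ₗ W.subtype

lemma IsTransverse.slopeDiffOn_surjective (hT : IsTransverse A W J y)
    (h : IsActivePair A J f g y) : Function.Surjective (slopeDiffOn A W J f g) := fun c => by
  classical
  obtain ⟨u, hu, hc⟩ := hT.exists_slopeDiff_eq h fun i => if hi : i ∈ J then c ⟨i, hi⟩ else 0
  exact ⟨⟨u, hu⟩, funext fun i => (hc i i.2).trans (dif_pos i.2)⟩

lemma IsTransverse.card_le_finrank [FiniteDimensional ℝ W] (hT : IsTransverse A W J y)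
    (h : IsActivePair A J f g y) : J.card ≤ finrank ℝ W := by
  simpa using LinearMap.finrank_le_finrank_of_surjective (hT.slopeDiffOn_surjective h)

lemma IsTransverse.eq_zero_of_slopeDiff_eq_zero [FiniteDimensional ℝ W]
    (hT : IsTransverse A W J y) (h : IsActivePair A J f g y) (hcard : J.card = finrank ℝ W)
    {u : E} (hu : u ∈ W) (h0 : ∀ i ∈ J, slopeDiff A f g i u = 0) : u = 0 := by
  have hinj : Function.Injective (slopeDiffOn A W J f g) :=
    (LinearMap.injective_iff_surjective_of_finrank_eq_finrank (by simp [hcard])).2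
      (hT.slopeDiffOn_surjective h)
  exact congrArg Subtype.val <| (map_eq_zero_iff _ hinj (x := ⟨u, hu⟩)).1 <|
    funext fun i => h0 i i.2

lemma IsTransverse.eq_or_eq_of_isActive [FiniteDimensional ℝ W] (hT : IsTransverse A W J y)
    (h : IsActivePair A J f g y) (hcard : J.card = finrank ℝ W) {i : ι} (hi : i ∈ J) {x : X}
    (hx : IsActive A i x y) : x = f i ∨ x = g i := by
  classical
  by_contra! hc
  obtain ⟨u, hu, s, hs⟩ := hT fun j w => if j = i ∧ w = x then 1 else 0
  have h0 : u = 0 := by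
    refine hT.eq_zero_of_slopeDiff_eq_zero h hcard hu fun j hj => ?_
    obtain ⟨-, hf, hg⟩ := h j hj
    rw [slopeDiff, LinearMap.sub_apply, hs j hj _ hf, hs j hj _ hg]
    rcases eq_or_ne j i with rfl | hji
    · simp [hc.1.symm, hc.2.symm]
    · simp [hji]
  have h1 := hs i hi x hx
  have h2 := hs i hi _ (h i hi).2.1
  simp [h0, hc.1.symm] at h1 h2
  linarith

open scoped Classical in
/-- A basis `e` of `W` dual to the differences of slopes of the active pairs `f`, `g` at the
crossing `y`: moving along `e i` leaves the hypersurface of colour `i` and stays on the others. -/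
structure IsDualFrame (A : ι → X → E →ᵃ[ℝ] ℝ) (W : Submodule ℝ E) (J : Finset ι) (y : E)
    (f g : ι → X) (e : ι → E) : Prop where
  isActivePair : IsActivePair A J f g y
  mem : ∀ i, e i ∈ W
  slopeDiff_eq : ∀ i, ∀ j ∈ J, slopeDiff A f g j (e i) = if j = i then 1 else 0
  eq_sum : ∀ u ∈ W, u = ∑ i ∈ J, slopeDiff A f g i u • e i
  eq_or_eq : ∀ i ∈ J, ∀ x, IsActive A i x y → x = f i ∨ x = g i

lemma IsTransverse.exists_isDualFrame [Nonempty X] [FiniteDimensional ℝ W]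
    (hT : IsTransverse A W J y) (hcard : J.card = finrank ℝ W) (hy : y ∈ crossings A J D) :
    ∃ f g e, IsDualFrame A W J y f g e := by
  classical
  obtain ⟨f, g, hfg⟩ := exists_isActivePair hy
  choose e he hdual using fun i => hT.exists_slopeDiff_eq hfg fun j => if j = i then 1 else 0
  refine ⟨f, g, e, hfg, he, hdual, fun u hu => sub_eq_zero.1 ?_, fun i hi x =>
    hT.eq_or_eq_of_isActive hfg hcard hi⟩
  refine hT.eq_zero_of_slopeDiff_eq_zero hfg hcard
    (W.sub_mem hu (W.sum_mem fun i _ => W.smul_mem _ (he i))) fun j hj => ?_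
  rw [map_sub, map_sum, sub_eq_zero]
  simp only [map_smul, smul_eq_mul, hdual _ j hj, mul_ite, mul_one, mul_zero, Finset.sum_ite_eq,
    hj, if_true]

end LocalFrame

section NearestPoints

variable {E : Type*} [NormedAddCommGroup E] [InnerProductSpace ℝ E] {o p y : E} {K : Set E}

lemma inner_nonpos_of_isMinOn_dist (hK : Convex ℝ K) (hp : p ∈ K) (hmin : IsMinOn (dist o) K p)
    (hy : y ∈ K) : inner ℝ (o - p) (y - p) ≤ 0 := by
  refine (norm_eq_iInf_iff_real_inner_le_zero hK hp).1 (le_antisymm ?_ ?_) y hy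
  · have : Nonempty K := ⟨⟨p, hp⟩⟩
    exact le_ciInf fun w => by
      simpa only [dist_eq_norm, Set.mem_ofPred_eq] using hmin w.2
  · exact ciInf_le (f := fun w : K => ‖o - w‖)
      ⟨0, Set.forall_mem_range.2 fun w => norm_nonneg _⟩ ⟨p, hp⟩

lemma dist_lt_dist_of_inner_nonpos (h : inner ℝ (o - p) (y - p) ≤ 0) (hne : y ≠ p) :
    dist o p < dist o y := by
  rw [dist_eq_norm, dist_eq_norm, ← sub_sub_sub_cancel_right o y p]
  refine lt_of_pow_lt_pow_left₀ 2 (norm_nonneg _) ?_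
  have : 0 < ‖y - p‖ := norm_pos_iff.2 (sub_ne_zero.2 hne)
  rw [norm_sub_sq_real (o - p)]
  nlinarith

lemma exists_forall_inner_sub_ne_zero {κ : Type*} [Finite κ] (p e : κ → E) (he : ∀ k, e k ≠ 0) :
    ∃ o, ∀ k, inner ℝ (o - p k) (e k) ≠ 0 := by
  -- The affine conditions become linear on `E × ℝ`, the index `none` keeping `t` away from `0`.
  let φ : Option κ → Module.Dual ℝ (E × ℝ)
    | none => LinearMap.snd ℝ E ℝ
    | some k => innerₛₗ ℝ (e k) ∘ₗ (LinearMap.fst ℝ E ℝ - (LinearMap.snd ℝ E ℝ).smulRight (p k))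
  obtain ⟨⟨o, t⟩, hot⟩ := Module.Dual.exists_forall_ne_zero_of_forall_exists φ fun
    | none => ⟨(0, 1), one_ne_zero⟩
    | some k => ⟨(e k, 0), by simp [φ, he k]⟩
  have ht : t ≠ 0 := hot none
  refine ⟨t⁻¹ • o, fun k hk => hot (some k) ?_⟩
  have : o - t • p k = t • (t⁻¹ • o - p k) := by rw [smul_sub, smul_inv_smul₀ ht]
  change inner ℝ (e k) (o - t • p k) = 0
  rw [this, inner_smul_right, real_inner_comm, hk, mul_zero]

end NearestPoints

section GenericPiece

variable {ι X E : Type*} [NormedAddCommGroup E] [InnerProductSpace ℝ E]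

/-- A closed convex piece `D` of the affine subspace `L` on which the hypersurfaces of the colours
in `J` meet transversally, where `#J = dim L`, so that they cross in isolated points. These points
are required to lie in the interior of `D` relative to `L`. -/
structure IsGenericPiece (A : ι → X → E →ᵃ[ℝ] ℝ) (L : AffineSubspace ℝ E) (J : Finset ι)
    (D : Set E) : Prop where
  isClosed : IsClosed D
  convex : Convex ℝ D
  subset : D ⊆ L
  isTransverse : ∀ y ∈ D, IsTransverse A L.direction J y
  card_eq : J.card = finrank ℝ L.direction
  mem_nhdsWithin : ∀ p ∈ crossings A J D, D ∈ 𝓝[L] p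

variable {A : ι → X → E →ᵃ[ℝ] ℝ} {L : AffineSubspace ℝ E} {W : Submodule ℝ E} {J : Finset ι}
  {D : Set E} {o p y u : E} {f g v : ι → X} {e : ι → E} {i : ι} {x : X}

namespace IsGenericPiece

lemma sub_mem (h : IsGenericPiece A L J D) (hp : p ∈ D) (hy : y ∈ D) : y - p ∈ L.direction :=
  L.vsub_mem_direction (h.subset hy) (h.subset hp)

lemma exists_isDualFrame [FiniteDimensional ℝ E] [Nonempty X] (h : IsGenericPiece A L J D)
    (hp : p ∈ crossings A J D) : ∃ f g e, IsDualFrame A L.direction J p f g e :=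
  (h.isTransverse p hp.1).exists_isDualFrame h.card_eq hp

lemma eq_of_isActive [FiniteDimensional ℝ E] [Nonempty X] (h : IsGenericPiece A L J D)
    (hp : p ∈ crossings A J D) (hy : y ∈ D)
    (hact : ∀ i ∈ J, ∀ x, IsActive A i x p → IsActive A i x y) : y = p := by
  obtain ⟨f, g, hfg⟩ := exists_isActivePair hp
  refine sub_eq_zero.1 ((h.isTransverse p hp.1).eq_zero_of_slopeDiff_eq_zero hfg h.card_eq
    (h.sub_mem hp.1 hy) fun i hi => ?_)
  obtain ⟨-, hf, hg⟩ := hfg i hi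
  rw [hfg.slopeDiff_sub hi, (hact i hi _ hf).eq (hact i hi _ hg), sub_self]

lemma finite_crossings [FiniteDimensional ℝ E] [Finite ι] [Finite X] [Nonempty X]
    (h : IsGenericPiece A L J D) : (crossings A J D).Finite := by
  refine Set.Finite.of_injOn (f := fun p i => {x | IsActive A i x p}) (Set.mapsTo_univ _ _)
    (fun p hp p' hp' hpp' => ?_) (Set.toFinite (Set.univ : Set (ι → Set X)))
  exact (h.eq_of_isActive hp hp'.1 fun i _ x hx => (Set.ext_iff.1 (congrFun hpp' i) x).1 hx).symm

lemma eventually_add_smul_mem_region [Finite X] (h : IsGenericPiece A L J D)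
    (hp : p ∈ crossings A J D) (hv : p ∈ region A J D v) (hu : u ∈ L.direction)
    (hle : ∀ i ∈ J, ∀ x, IsActive A i x p → (A i x).linear u ≤ (A i (v i)).linear u) :
    ∀ᶠ t in 𝓝[>] (0 : ℝ), p + t • u ∈ region A J D v := by
  have hlim : Tendsto (fun t : ℝ => p + t • u) (𝓝[>] 0) (𝓝[L] p) := by
    refine tendsto_nhdsWithin_iff.2 ⟨?_, Eventually.of_forall fun t =>
      add_smul_mem_of_mem_direction (h.subset hp.1) hu t⟩
    exact ((continuous_const.add (continuous_id.smul continuous_const)).tendsto' 0 p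
      (by simp)).mono_left nhdsWithin_le_nhds
  filter_upwards [hlim (h.mem_nhdsWithin p hp),
    (eventually_all_finset J).2 fun i hi => (hv.2 i hi).eventually_add_smul (hle i hi)]
    with t ht ht' using ⟨ht, ht'⟩

end IsGenericPiece

lemma IsDualFrame.ne_zero (F : IsDualFrame A W J p f g e) (hi : i ∈ J) : e i ≠ 0 := fun h0 => by
  simpa [h0] using F.slopeDiff_eq i i hi

lemma IsDualFrame.inner_nonpos (F : IsDualFrame A W J p f g e) (hyp : y - p ∈ W)
    (hv : ∀ i ∈ J, v i = if inner ℝ (o - p) (e i) ≤ 0 then f i else g i)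
    (hy : ∀ i ∈ J, IsActive A i (v i) y) : inner ℝ (o - p) (y - p) ≤ 0 := by
  rw [F.eq_sum _ hyp, inner_sum]
  refine Finset.sum_nonpos fun i hi => ?_
  have hyi := hy i hi
  rw [hv i hi] at hyi
  rw [inner_smul_right, F.isActivePair.slopeDiff_sub hi]
  split_ifs at hyi with hs
  · exact mul_nonpos_of_nonneg_of_nonpos (sub_nonneg.2 (hyi _)) hs
  · exact mul_nonpos_of_nonpos_of_nonneg (sub_nonpos.2 (hyi _)) (not_le.1 hs).le

/-- Of the two labels `f i`, `g i` only the one pointing away from `o` can label a region whose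
nearest point is `p`: otherwise moving along `± e i` would bring `p` closer to `o`. -/
lemma IsGenericPiece.label_eq_of_isMinOn [Finite X] (h : IsGenericPiece A L J D)
    (hp : p ∈ crossings A J D) (F : IsDualFrame A L.direction J p f g e)
    (hv : p ∈ region A J D v) (hmin : IsMinOn (dist o) (region A J D v) p) (hi : i ∈ J)
    (hne : inner ℝ (o - p) (e i) ≠ 0) :
    v i = if inner ℝ (o - p) (e i) ≤ 0 then f i else g i := by
  have hdecrease (s : ℝ) (hs : ∀ x, IsActive A i x p →
      (A i x).linear (s • e i) ≤ (A i (v i)).linear (s • e i)) :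
      s * inner ℝ (o - p) (e i) ≤ 0 := by
    have hmem : ∀ᶠ t in 𝓝[>] (0 : ℝ), p + t • s • e i ∈ region A J D v := by
      refine h.eventually_add_smul_mem_region hp hv (Submodule.smul_mem _ s (F.mem i))
        fun j hj x hx => ?_
      rcases eq_or_ne j i with rfl | hji
      · exact hs x hx
      · have h0 := F.slopeDiff_eq i j hj
        rw [if_neg hji, slopeDiff, LinearMap.sub_apply, sub_eq_zero] at h0
        rcases F.eq_or_eq j hj x hx with rfl | rfl <;>
          rcases F.eq_or_eq j hj _ (hv.2 j hj) with h5 | h5 <;> simp [h5, h0]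
    obtain ⟨t, ht, ht0⟩ := (hmem.and self_mem_nhdsWithin).exists
    have := inner_nonpos_of_isMinOn_dist (convex_region h.convex) hv hmin ht
    rw [add_sub_cancel_left, inner_smul_right, inner_smul_right] at this
    exact nonpos_of_mul_nonpos_right this ht0
  have h1 : (A i (f i)).linear (e i) - (A i (g i)).linear (e i) = 1 := by
    simpa [slopeDiff] using F.slopeDiff_eq i i hi
  rcases F.eq_or_eq i hi _ (hv.2 i hi) with hvi | hvi
  · have := hdecrease 1 fun x hx => by
      rcases F.eq_or_eq i hi x hx with rfl | rfl <;> rw [hvi]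
      simp only [one_smul]
      linarith
    rw [if_pos (by linarith), hvi]
  · have := hdecrease (-1) fun x hx => by
      rcases F.eq_or_eq i hi x hx with rfl | rfl <;> rw [hvi]
      simp only [neg_smul, one_smul, map_neg]
      linarith
    rw [if_neg fun h0 => hne (by linarith), hvi]

/-- Seen from `o`, every crossing `p` is the strictly nearest point of the region labelled `ℓ p`,
and of no other region. -/
structure IsNearestLabelling (A : ι → X → E →ᵃ[ℝ] ℝ) (J : Finset ι) (D : Set E) (o : E)
    (ℓ : E → ι → X) : Prop where
  mem_region : ∀ p ∈ crossings A J D, p ∈ region A J D (ℓ p)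
  dist_lt : ∀ p ∈ crossings A J D, ∀ y ∈ region A J D (ℓ p), y ≠ p → dist o p < dist o y
  eq_of_isMinOn : ∀ p ∈ crossings A J D, ∀ v, p ∈ region A J D v →
    IsMinOn (dist o) (region A J D v) p → ∀ i ∈ J, v i = ℓ p i

lemma IsGenericPiece.exists_isNearestLabelling [FiniteDimensional ℝ E] [Finite ι] [Finite X]
    [Nonempty X] (h : IsGenericPiece A L J D) : ∃ o ℓ, IsNearestLabelling A J D o ℓ := by
  choose! f g e F using fun p (hp : p ∈ crossings A J D) => h.exists_isDualFrame hp
  have := h.finite_crossings.to_subtype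
  obtain ⟨o, ho⟩ := exists_forall_inner_sub_ne_zero
    (fun k : crossings A J D × J => (k.1 : E)) (fun k => e k.1 k.2)
    fun k => (F k.1 k.1.2).ne_zero k.2.2
  refine ⟨o, fun p i => if inner ℝ (o - p) (e p i) ≤ 0 then f p i else g p i,
    fun p hp => ⟨hp.1, fun i hi => ?_⟩, fun p hp y hy hne => ?_, fun p hp v hv hmin i hi => ?_⟩
  · obtain ⟨-, hf, hg⟩ := (F p hp).isActivePair i hi
    dsimp only
    split_ifs
    exacts [hf, hg]
  · exact dist_lt_dist_of_inner_nonpos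
      ((F p hp).inner_nonpos (h.sub_mem hp.1 hy.1) (fun _ _ => rfl) hy.2) hne
  · exact h.label_eq_of_isMinOn hp (F p hp) hv hmin hi (ho (⟨p, hp⟩, ⟨i, hi⟩))

end GenericPiece

section Cocycle

variable {ι X E M : Type*} [NormedAddCommGroup E] [InnerProductSpace ℝ E]
  {A : ι → X → E →ᵃ[ℝ] ℝ} {L : AffineSubspace ℝ E} {J : Finset ι}
  {D : Set E} {o p q q' : E} {v v' : ι → X} {i : ι} {x : X} {ℓ : E → ι → X}

/-- The sum of `z` over all changes of the label of one colour in `J` vanishes. -/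
def IsCocycle [DecidableEq ι] [Fintype X] [AddCommMonoid M] (J : Finset ι)
    (z : (ι → X) → M) : Prop :=
  ∀ v, ∀ i ∈ J, ∑ x, z (Function.update v i x) = 0

lemma dist_lt_dist_of_mem_region_update [DecidableEq ι] [Finite X] (hD : Convex ℝ D) (hi : i ∈ J)
    (hq : q ∈ region A J D v) (hmin : IsMinOn (dist o) (region A J D v) q)
    (huniq : ∀ w, IsActive A i w q → w = v i) (hx : x ≠ v i)
    (hq' : q' ∈ region A J D (Function.update v i x)) : dist o q < dist o q' := by
  have hne : q' ≠ q := by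
    rintro rfl
    exact hx (huniq x (by simpa using hq'.2 i hi))
  have hact : ∀ᶠ t in 𝓝[>] (0 : ℝ), IsActive A i (v i) (q + t • (q' - q)) :=
    (hq.2 i hi).eventually_add_smul fun w hw => by rw [huniq w hw]
  obtain ⟨t, ht, ht0, ht1⟩ := (hact.and (Ioo_mem_nhdsGT one_pos)).exists
  have hmem : q + t • (q' - q) ∈ region A J D v := by
    refine ⟨hD.add_smul_sub_mem hq.1 hq'.1 ⟨ht0.le, ht1.le⟩, fun j hj => ?_⟩
    rcases eq_or_ne j i with rfl | hji
    · exact ht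
    · exact (convex_setOf_isActive A j (v j)).add_smul_sub_mem (hq.2 j hj)
        (by simpa [hji] using hq'.2 j hj) ⟨ht0.le, ht1.le⟩
  have hinner := inner_nonpos_of_isMinOn_dist (convex_region hD) hq hmin hmem
  rw [add_sub_cancel_left, inner_smul_right] at hinner
  exact dist_lt_dist_of_inner_nonpos (nonpos_of_mul_nonpos_right hinner ht0) hne

/-- Consider a region of the support whose nearest point to `o` is farthest away. If this point
is not a crossing, one of its labels can be changed within the support, to a farther region. -/
lemma IsCocycle.eq_zero [DecidableEq ι] [FiniteDimensional ℝ E] [Finite ι] [Fintype X]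
    [AddCommMonoid M] {z : (ι → X) → M} (hz : IsCocycle J z) (hDcl : IsClosed D) (hD : Convex ℝ D)
    (o : E)
    (hempty : ∀ v, region A J D v = ∅ → z v = 0)
    (hcross : ∀ v, ∀ q ∈ crossings A J D, q ∈ region A J D v →
      IsMinOn (dist o) (region A J D v) q → z v = 0) (v : ι → X) : z v = 0 := by
  by_contra hv
  have hnear : ∀ v, z v ≠ 0 → ∃ q ∈ region A J D v, IsMinOn (dist o) (region A J D v) q :=
    fun v hv => by
      obtain ⟨q, hq, hdist⟩ := (isClosed_region hDcl).exists_infDist_eq_dist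
        (Set.nonempty_iff_ne_empty.2 fun h => hv (hempty v h)) o
      exact ⟨q, hq, fun y hy => hdist ▸ Metric.infDist_le_dist_of_mem hy⟩
  choose! q hq hmin using hnear
  obtain ⟨v, hv, hmax⟩ := Set.exists_max_image {v | z v ≠ 0} (fun v => dist o (q v))
    (Set.toFinite _) ⟨v, hv⟩
  obtain ⟨i, hi, huniq⟩ : ∃ i ∈ J, ∀ w, IsActive A i w (q v) → w = v i := by
    by_contra! hcon
    refine hv (hcross v (q v) ⟨(hq v hv).1, fun i hi => ?_⟩ (hq v hv) (hmin v hv))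
    obtain ⟨w, hw, hne⟩ := hcon i hi
    exact ⟨w, v i, hne, hw, (hq v hv).2 i hi⟩
  obtain ⟨x, hx, hzx⟩ : ∃ x, x ≠ v i ∧ z (Function.update v i x) ≠ 0 := by
    by_contra! hcon
    have h0 := hz v i hi
    rw [Fintype.sum_eq_single (v i) hcon, Function.update_eq_self] at h0
    exact hv h0
  exact (dist_lt_dist_of_mem_region_update hD hi (hq v hv) (hmin v hv) huniq hx
    (hq _ hzx)).not_ge (hmax _ hzx)

open scoped Classical in
/-- The sum of the coefficients `c p` of the points `p ∈ S` lying in the region of `v`. -/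
noncomputable def regionSum (A : ι → X → E →ᵃ[ℝ] ℝ) (J : Finset ι) (S : Finset E)
    (c : E → ZMod 2) (v : ι → X) : ZMod 2 :=
  ∑ p ∈ S with ∀ i ∈ J, IsActive A i (v i) p, c p

variable {S : Finset E} {c c' : E → ZMod 2}

lemma regionSum_congr (h : ∀ i ∈ J, v i = v' i) :
    regionSum A J S c v = regionSum A J S c v' := by
  classical
  rw [regionSum, regionSum, Finset.filter_congr fun _ _ => forall₂_congr fun i hi => by rw [h i hi]]

lemma regionSum_sub : regionSum A J S (c - c') v = regionSum A J S c v - regionSum A J S c' v :=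
  Finset.sum_sub_distrib ..

lemma regionSum_eq_zero_of_region_eq_empty (hS : (S : Set E) ⊆ D) (h : region A J D v = ∅) :
    regionSum A J S c v = 0 := by
  classical
  refine Finset.sum_eq_zero fun _ hp => ?_
  rw [Finset.mem_filter] at hp
  exact (Set.eq_empty_iff_forall_notMem.1 h _ ⟨hS hp.1, hp.2⟩).elim

lemma IsNearestLabelling.eqOn_zero (hℓ : IsNearestLabelling A J D o ℓ)
    (hS : (S : Set E) = crossings A J D) (h : ∀ p ∈ S, regionSum A J S c (ℓ p) = 0) :
    Set.EqOn c 0 S := by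
  classical
  by_contra! hc
  simp only [Set.EqOn, not_forall] at hc
  obtain ⟨p₀, hp₀, hcp₀⟩ := hc
  obtain ⟨p, hp, hmax⟩ := Finset.exists_max_image (S.filter fun p => c p ≠ 0) (dist o)
    ⟨p₀, Finset.mem_filter.2 ⟨hp₀, hcp₀⟩⟩
  obtain ⟨hpS, hcp⟩ := Finset.mem_filter.1 hp
  have hmem : ∀ {q}, q ∈ S → q ∈ crossings A J D := fun hq => hS ▸ hq
  refine hcp ((Finset.sum_eq_single p (fun q hq hqp => ?_) fun hn => ?_).symm.trans (h p hpS))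
  · obtain ⟨hqS, hq⟩ := Finset.mem_filter.1 hq
    by_contra hcq
    exact (hℓ.dist_lt p (hmem hpS) q ⟨(hmem hqS).1, hq⟩ hqp).not_ge
      (hmax q (Finset.mem_filter.2 ⟨hqS, hcq⟩))
  · exact absurd (Finset.mem_filter.2 ⟨hpS, (hℓ.mem_region p (hmem hpS)).2⟩) hn

namespace IsGenericPiece

lemma eqOn_zero_of_regionSum_eq_zero [FiniteDimensional ℝ E] [Finite ι] [Finite X] [Nonempty X]
    (h : IsGenericPiece A L J D) (hS : (S : Set E) = crossings A J D)
    (hc : ∀ v, regionSum A J S c v = 0) : Set.EqOn c 0 S :=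
  let ⟨_, _, hℓ⟩ := h.exists_isNearestLabelling
  hℓ.eqOn_zero hS fun _ _ => hc _

lemma isCocycle_regionSum [DecidableEq ι] [FiniteDimensional ℝ E] [Fintype X] [Nonempty X]
    (h : IsGenericPiece A L J D) (hS : (S : Set E) = crossings A J D) (c : E → ZMod 2) :
    IsCocycle J (regionSum A J S c) := fun v i hi => by
  classical
  simp only [regionSum, Finset.sum_filter]
  rw [Finset.sum_comm]
  refine Finset.sum_eq_zero fun p hp => ?_
  obtain ⟨f, g, e, F⟩ := h.exists_isDualFrame (show p ∈ crossings A J D from hS ▸ hp)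
  obtain ⟨hne, hf, hg⟩ := F.isActivePair i hi
  -- `p` lies in the regions of `update v i x` for the two labels `x = f i`, `g i`, or for none.
  have hiff (x : X) : (∀ j ∈ J, IsActive A j (Function.update v i x j) p) ↔
      (∀ j ∈ J, j ≠ i → IsActive A j (v j) p) ∧ x ∈ ({f i, g i} : Finset X) := by
    rw [Finset.mem_insert, Finset.mem_singleton]
    constructor
    · intro hx
      exact ⟨fun j hj hji => by simpa [hji] using hx j hj,
        F.eq_or_eq i hi x (by simpa using hx i hi)⟩
    · rintro ⟨hv, hx⟩ j hj
      rcases eq_or_ne j i with rfl | hji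
      · rcases hx with rfl | rfl <;> simpa
      · simpa [hji] using hv j hj hji
  simp only [hiff, ite_and]
  split_ifs
  · rw [Finset.sum_ite_mem, Finset.univ_inter, Finset.sum_pair hne, CharTwo.add_self_eq_zero]
  · exact Finset.sum_const_zero

/-- The region sums are determined by their values on the regions of a nearest labelling, and these
values can be prescribed arbitrarily. -/
lemma exists_eq_regionSum [DecidableEq ι] [FiniteDimensional ℝ E] [Finite ι] [Fintype X]
    [Nonempty X]
    (h : IsGenericPiece A L J D) (hS : (S : Set E) = crossings A J D) {z : (ι → X) → ZMod 2}
    (hz : IsCocycle J z) (hempty : ∀ v, region A J D v = ∅ → z v = 0)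
    (hJ : ∀ v v', (∀ i ∈ J, v i = v' i) → z v = z v') :
    ∃ c, ∀ v, z v = regionSum A J S c v := by
  classical
  obtain ⟨o, ℓ, hℓ⟩ := h.exists_isNearestLabelling
  obtain ⟨c, hc⟩ : ∃ c : E → ZMod 2, ∀ p ∈ S, regionSum A J S c (ℓ p) = z (ℓ p) := by
    let extend (c : S → ZMod 2) (p : E) : ZMod 2 := if hp : p ∈ S then c ⟨p, hp⟩ else 0
    let Φ (c : S → ZMod 2) (p : S) : ZMod 2 := regionSum A J S (extend c) (ℓ p)
    have hinj : Function.Injective Φ := fun c c' hcc' => funext fun p => by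
      have h0 := hℓ.eqOn_zero (c := extend c - extend c') hS
        (fun q hq => by rw [regionSum_sub, sub_eq_zero]; exact congrFun hcc' ⟨q, hq⟩) p.2
      simpa [extend, sub_eq_zero] using h0
    obtain ⟨c, hc⟩ := Finite.surjective_of_injective hinj fun p => z (ℓ p)
    exact ⟨extend c, fun p hp => congrFun hc ⟨p, hp⟩⟩
  have hSD : (S : Set E) ⊆ D := hS ▸ fun p hp => hp.1
  refine ⟨c, fun v => sub_eq_zero.1 ?_⟩
  refine IsCocycle.eq_zero (A := A) (J := J) (z := fun v => z v - regionSum A J S c v)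
    (fun v i hi => ?_) h.isClosed h.convex o (fun v hv => ?_) (fun v q hq hqv hmin => ?_) v
  · rw [Finset.sum_sub_distrib, hz v i hi, h.isCocycle_regionSum hS c v i hi, sub_zero]
  · rw [hempty v hv, regionSum_eq_zero_of_region_eq_empty hSD hv, sub_zero]
  · have hv := hℓ.eq_of_isMinOn q hq v hqv hmin
    rw [hJ v _ hv, regionSum_congr hv, hc q (by simpa [← hS] using hq), sub_self]

end IsGenericPiece

end Cocycle

lemma exists_uniform_bound {α κ : Type*} [Finite κ] (K : κ → Set α) (ξ : α → ℝ) :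
    ∃ B, ∀ k, (BddAbove (ξ '' K k) → ∀ y ∈ K k, ξ y ≤ B) ∧
      ((K k).Nonempty → ∃ y ∈ K k, ξ y ≤ B) := by
  have hsingle : ∀ k, ∃ B, (BddAbove (ξ '' K k) → ∀ y ∈ K k, ξ y ≤ B) ∧
      ((K k).Nonempty → ∃ y ∈ K k, ξ y ≤ B) := fun k => by
    by_cases hb : BddAbove (ξ '' K k)
    · obtain ⟨B, hB⟩ := hb
      have hle : ∀ y ∈ K k, ξ y ≤ B := fun y hy => hB (Set.mem_image_of_mem ξ hy)
      exact ⟨B, fun _ => hle, fun ⟨y, hy⟩ => ⟨y, hy, hle y hy⟩⟩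
    · rcases (K k).eq_empty_or_nonempty with hem | ⟨y, hy⟩
      · simp [hem]
      · exact ⟨ξ y, fun h => absurd h hb, fun _ => ⟨y, hy, le_rfl⟩⟩
  choose B hB using hsingle
  obtain ⟨M, hM⟩ := Finite.exists_le B
  refine ⟨M, fun k => ⟨fun hb y hy => ((hB k).1 hb y hy).trans (hM k), fun hne => ?_⟩⟩
  obtain ⟨y, hy, hle⟩ := (hB k).2 hne
  exact ⟨y, hy, hle.trans (hM k)⟩

section Rays

variable {ι X E : Type*} [NormedAddCommGroup E] [InnerProductSpace ℝ E]

/-- The slope of the label `x` in the direction `u` is maximal among the labels of colour `i`. -/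
def IsSteepest (A : ι → X → E →ᵃ[ℝ] ℝ) (i : ι) (x : X) (u : E) : Prop :=
  ∀ w, (A i w).linear u ≤ (A i x).linear u

/-- In no direction of `W` do all labels of a colour in `J` have the same slope. -/
def IsCoercive (A : ι → X → E →ᵃ[ℝ] ℝ) (W : Submodule ℝ E) (J : Finset ι) : Prop :=
  ∀ i ∈ J, ∀ u ∈ W, u ≠ 0 → ∃ x x', (A i x).linear u ≠ (A i x').linear u

/-- The total excess of the slope of `w` over the slopes of the labels of colour `j`. It is
positive in every direction in which `w` is steepest and which sees two different slopes. -/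
noncomputable def labelSlope [Fintype X] (A : ι → X → E →ᵃ[ℝ] ℝ) (j : ι) (w : X) : E →ₗ[ℝ] ℝ :=
  ∑ x, ((A j w).linear - (A j x).linear)

variable {A : ι → X → E →ᵃ[ℝ] ℝ} {W W' : Submodule ℝ E} {J J' : Finset ι} {K : Set E} {y u : E}
  {i : ι} {x : X}

lemma exists_ray [FiniteDimensional ℝ E] (hK : Convex ℝ K) (hKcl : IsClosed K) (hy : y ∈ K)
    (hKb : ¬ Bornology.IsBounded K) : ∃ u ≠ 0, ∀ t : ℝ, 0 ≤ t → y + t • u ∈ K := by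
  obtain ⟨u, hu0, hu⟩ := not_bounded_iff_exists_ne_zero_mem_asymptoticCone.1 hKb
  refine ⟨u, hu0, fun t ht => ?_⟩
  simpa [add_comm] using hK.smul_vadd_mem_of_isClosed_of_mem_asymptoticCone hKcl ht hu hy

lemma isSteepest_of_forall_isActive (h : ∀ t : ℝ, 0 ≤ t → IsActive A i x (y + t • u)) :
    IsSteepest A i x u := fun w => by
  by_contra! hlt
  set δ := (A i w).linear u - (A i x).linear u with hδ
  have hδ0 : 0 < δ := sub_pos.2 hlt
  have h0 : A i w y ≤ A i x y := by simpa using h 0 le_rfl w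
  have := h ((A i x y - A i w y + 1) / δ) (by positivity) w
  rw [affineMap_add_smul, affineMap_add_smul] at this
  have h1 : (A i x y - A i w y + 1) / δ * δ = A i x y - A i w y + 1 := div_mul_cancel₀ _ hδ0.ne'
  rw [hδ, mul_sub] at h1
  linarith

lemma IsActive.add_smul (h : IsActive A i x y) (hu : IsSteepest A i x u) {t : ℝ} (ht : 0 ≤ t) :
    IsActive A i x (y + t • u) := fun w => by
  rw [affineMap_add_smul, affineMap_add_smul]
  exact add_le_add (h w) (mul_le_mul_of_nonneg_left (hu w) ht)

lemma IsCoercive.anti (h : IsCoercive A W J) (hW : W' ≤ W) (hJ : J' ⊆ J) : IsCoercive A W' J' :=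
  fun i hi u hu => h i (hJ hi) u (hW hu)

lemma IsCoercive.exists_linear_lt (h : IsCoercive A W J) (hi : i ∈ J) (hu : u ∈ W) (hu0 : u ≠ 0)
    (hx : IsSteepest A i x u) : ∃ w, (A i w).linear u < (A i x).linear u := by
  obtain ⟨w, w', hne⟩ := h i hi u hu hu0
  by_contra! hle
  exact hne (((hx w).antisymm (hle w)).trans ((hx w').antisymm (hle w')).symm)

lemma IsCoercive.labelSlope_pos [Fintype X] (h : IsCoercive A W J) (hi : i ∈ J) (hu : u ∈ W)
    (hu0 : u ≠ 0) (hx : IsSteepest A i x u) : 0 < labelSlope A i x u := by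
  obtain ⟨w, hw⟩ := h.exists_linear_lt hi hu hu0 hx
  rw [labelSlope, LinearMap.sum_apply]
  exact Finset.sum_pos' (fun w _ => sub_nonneg.2 (hx w)) ⟨w, Finset.mem_univ w, sub_pos.2 hw⟩

lemma bddAbove_affineMap_image [FiniteDimensional ℝ E] (h : Bornology.IsBounded K)
    (f : E →ᵃ[ℝ] ℝ) : BddAbove (f '' K) :=
  (h.isCompact_closure.bddAbove_image f.continuous_of_finiteDimensional.continuousOn).mono
    (Set.image_mono subset_closure)

end Rays

section Slices

variable {ι X E : Type*} [NormedAddCommGroup E] [InnerProductSpace ℝ E]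

/-- The hyperplane section `ξ = C` of an affine subspace. -/
def slice (L : AffineSubspace ℝ E) (ξ : E →ₗ[ℝ] ℝ) (C : ℝ) : AffineSubspace ℝ E :=
  L ⊓ (AffineSubspace.mk' C (⊥ : Submodule ℝ ℝ)).comap ξ.toAffineMap

variable {A : ι → X → E →ᵃ[ℝ] ℝ} {L : AffineSubspace ℝ E} {W : Submodule ℝ E} {J : Finset ι}
  {ξ : E →ₗ[ℝ] ℝ} {C : ℝ} {y u : E}

lemma mem_slice : y ∈ slice L ξ C ↔ y ∈ L ∧ ξ y = C := by
  simp [slice, AffineSubspace.mem_inf_iff, sub_eq_zero]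

lemma slice_le : slice L ξ C ≤ L :=
  inf_le_left

lemma add_smul_mem_slice (hy : y ∈ L) (hu : u ∈ L.direction) (hξu : ξ u ≠ 0) :
    y + ((C - ξ y) / ξ u) • u ∈ slice L ξ C := by
  refine mem_slice.2 ⟨add_smul_mem_of_mem_direction hy hu _, ?_⟩
  rw [map_add, map_smul, smul_eq_mul, div_mul_cancel₀ _ hξu, add_sub_cancel]

lemma slice_nonempty (hu : u ∈ L.direction) (hξu : ξ u ≠ 0) : (slice L ξ C : Set E).Nonempty := by
  rcases L.eq_bot_or_nonempty with rfl | ⟨y, hy⟩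
  · simp_all
  · exact ⟨_, add_smul_mem_slice hy hu hξu⟩

lemma direction_slice (hu : u ∈ L.direction) (hξu : ξ u ≠ 0) :
    (slice L ξ C).direction = L.direction ⊓ LinearMap.ker ξ := by
  obtain ⟨y, hy⟩ := slice_nonempty (C := C) hu hξu
  obtain ⟨hyL, hyC⟩ := mem_slice.1 hy
  ext w
  rw [AffineSubspace.mem_direction_iff_eq_vsub_right hy]
  constructor
  · rintro ⟨y', hy', rfl⟩
    obtain ⟨hyL', hyC'⟩ := mem_slice.1 hy'
    exact ⟨L.vsub_mem_direction hyL' hyL, by simp [hyC, hyC']⟩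
  · rintro ⟨hwL, hwξ⟩
    refine ⟨w + y, mem_slice.2 ⟨L.vadd_mem_of_mem_direction hwL hyL, ?_⟩, by simp⟩
    rw [map_add, LinearMap.mem_ker.1 hwξ, zero_add, hyC]

lemma finrank_direction_slice_add_one [FiniteDimensional ℝ E] (hu : u ∈ L.direction)
    (hξu : ξ u ≠ 0) : finrank ℝ (slice L ξ C).direction + 1 = finrank ℝ L.direction := by
  have hne : ξ.domRestrict L.direction ≠ 0 := fun h0 => hξu (LinearMap.congr_fun h0 ⟨u, hu⟩)
  rw [direction_slice hu hξu, ← Module.Dual.finrank_ker_add_one_of_ne_zero hne,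
    LinearMap.ker_domRestrict, ← Submodule.map_comap_subtype, Submodule.finrank_map_subtype_eq]

lemma IsTransverse.inf_ker (hT : IsTransverse A W J y) (hu : u ∈ W) (hξu : ξ u ≠ 0) {s : ι → ℝ}
    (hs : ∀ i ∈ J, ∀ x, IsActive A i x y → (A i x).linear u = s i) :
    IsTransverse A (W ⊓ LinearMap.ker ξ) J y := fun r => by
  obtain ⟨u', hu', s', hs'⟩ := hT r
  refine ⟨u' - (ξ u' / ξ u) • u, ⟨W.sub_mem hu' (W.smul_mem _ hu), ?_⟩,
    fun i => s' i - ξ u' / ξ u * s i, fun i hi x hx => ?_⟩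
  · rw [SetLike.mem_coe, LinearMap.mem_ker, map_sub, map_smul, smul_eq_mul,
      div_mul_cancel₀ _ hξu, sub_self]
  · rw [map_sub, map_smul, hs' i hi x hx, hs i hi x hx, smul_eq_mul, add_sub_assoc]

/-- Points with the same active labels differ by a vector along which all active labels of a
colour have the same slope, so transversality can only fail in finitely many slices. -/
lemma finite_image_not_isTransverse [Finite ι] [Finite X] [Nonempty X]
    (hT : ∀ y ∈ L, IsTransverse A L.direction J y) (ξ : E →ₗ[ℝ] ℝ) :
    (ξ '' {y ∈ L | ¬ IsTransverse A (L.direction ⊓ LinearMap.ker ξ) J y}).Finite := by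
  let F (τ : ι → Set X) : Set E := {y ∈ L | (¬ IsTransverse A (L.direction ⊓ LinearMap.ker ξ) J y) ∧
    (fun i => {x | IsActive A i x y}) = τ}
  have hF : ∀ τ, (ξ '' F τ).Subsingleton := by
    rintro τ _ ⟨y, ⟨hy, hyT, rfl⟩, rfl⟩ _ ⟨y', ⟨hy', -, hact⟩, rfl⟩
    by_contra hne
    choose m hm using fun i => exists_isActive A i y
    refine hyT ((hT y hy).inf_ker (u := y' - y) (L.vsub_mem_direction hy' hy)
      (by rwa [map_sub, sub_ne_zero, ne_comm]) (s := fun i => A i (m i) y' - A i (m i) y)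
      fun i _ x hx => ?_)
    have hact' : ∀ x, IsActive A i x y → IsActive A i x y' := fun x =>
      (Set.ext_iff.1 (congrFun hact i) x).2
    rw [affineMap_linear_sub, hx.eq (hm i), (hact' x hx).eq (hact' _ (hm i))]
  refine (Set.finite_iUnion fun τ => (hF τ).finite).subset ?_
  rintro _ ⟨y, ⟨hy, hyT⟩, rfl⟩
  exact Set.mem_iUnion.2 ⟨_, y, ⟨hy, hyT, rfl⟩, rfl⟩

lemma exists_gt_isTransverse_slice [Finite ι] [Finite X] [Nonempty X]
    (hT : ∀ y ∈ L, IsTransverse A L.direction J y) (hu : u ∈ L.direction) (hξu : ξ u ≠ 0)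
    (B : ℝ) : ∃ C > B, ∀ y ∈ slice L ξ C, IsTransverse A (slice L ξ C).direction J y := by
  obtain ⟨C, hC, hCT⟩ :=
    (Set.Ioi_infinite B).exists_notMem_finset (finite_image_not_isTransverse hT ξ).toFinset
  refine ⟨C, hC, fun y hy => ?_⟩
  rw [direction_slice hu hξu]
  by_contra hyT
  obtain ⟨hyL, hyC⟩ := mem_slice.1 hy
  exact hCT (by simpa using ⟨y, ⟨hyL, hyT⟩, hyC⟩)

lemma isGenericPiece_self [FiniteDimensional ℝ E] (hT : ∀ y ∈ L, IsTransverse A L.direction J y)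
    (hcard : J.card = finrank ℝ L.direction) : IsGenericPiece A L J L where
  isClosed := L.closed_of_finiteDimensional
  convex := L.convex
  subset := subset_rfl
  isTransverse := hT
  card_eq := hcard
  mem_nhdsWithin _ _ := self_mem_nhdsWithin

end Slices

section Ends

variable {ι X E : Type*} [NormedAddCommGroup E] [InnerProductSpace ℝ E]

/-- A cocycle `z`, depending only on the labels of the colours in `J`, that is supported on the
unbounded regions of `L`. -/
structure IsCocycleAtInfinity [DecidableEq ι] [Fintype X] (A : ι → X → E →ᵃ[ℝ] ℝ)
    (L : AffineSubspace ℝ E) (J : Finset ι) (z : (ι → X) → ZMod 2) : Prop where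
  isCocycle : IsCocycle J z
  congr : ∀ v v', (∀ i ∈ J, v i = v' i) → z v = z v'
  eq_zero_of_isBounded : ∀ v, Bornology.IsBounded (region A J L v) → z v = 0

/-- A section `T` of the unbounded edges of colours `J \ {j}` that run to infinity inside the
domain of the label `w` of colour `j`: the edge through `p ∈ T` has the direction `dir p`, and the
cocycles at infinity are spanned, on the regions with label `w`, by the points of `T`. -/
structure IsEndSection [DecidableEq ι] [Fintype X] (A : ι → X → E →ᵃ[ℝ] ℝ)
    (L : AffineSubspace ℝ E) (J : Finset ι) (j : ι) (w : X) (T : Finset E) (dir : E → E) :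
    Prop where
  mem_crossings : ∀ p ∈ T, p ∈ crossings A (J.erase j) L
  isActive_iff : ∀ p ∈ T, ∀ x, IsActive A j x p ↔ x = w
  dir_mem : ∀ p ∈ T, dir p ∈ L.direction
  dir_ne_zero : ∀ p ∈ T, dir p ≠ 0
  isSteepest : ∀ p ∈ T, ∀ i ∈ J, ∀ x, IsActive A i x p → IsSteepest A i x (dir p)
  labelSlope_eq : ∀ p ∈ T, ∀ p' ∈ T, labelSlope A j w p = labelSlope A j w p'
  exists_eq_regionSum : ∀ z, IsCocycleAtInfinity A L J z →
    ∃ c, ∀ v, z (Function.update v j w) = regionSum A (J.erase j) T c v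

variable {A : ι → X → E →ᵃ[ℝ] ℝ} {L : AffineSubspace ℝ E} {W : Submodule ℝ E} {J : Finset ι}
  {D : Set E} {p y u : E} {v : ι → X} {i j : ι} {w x : X} {ξ : E →ₗ[ℝ] ℝ} {B C : ℝ}

lemma exists_isSteepest_of_cell [FiniteDimensional ℝ E] {τ : ι → Set X} (hp : p ∈ cell A τ L)
    (hb : ¬ Bornology.IsBounded (cell A τ L)) :
    ∃ u ∈ L.direction, u ≠ 0 ∧ ∀ i, ∀ x ∈ τ i, IsSteepest A i x u := by
  obtain ⟨u, hu0, hu⟩ := exists_ray (convex_cell A τ L.convex)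
    (isClosed_cell A τ L.closed_of_finiteDimensional) hp hb
  refine ⟨u, ?_, hu0, fun i x hx => isSteepest_of_forall_isActive fun t ht => (hu t ht).2 i x hx⟩
  simpa using L.vsub_mem_direction (hu 1 zero_le_one).1 hp.1

lemma exists_isSteepest_of_region [FiniteDimensional ℝ E]
    (hb : ¬ Bornology.IsBounded (region A J L v)) :
    ∃ u ∈ L.direction, u ≠ 0 ∧ ∀ i ∈ J, IsSteepest A i (v i) u := by
  rw [region_eq_cell] at hb
  obtain ⟨p, hp⟩ : (cell A (fun i => {x | i ∈ J ∧ x = v i}) (L : Set E)).Nonempty :=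
    Bornology.nonempty_of_not_isBounded hb
  obtain ⟨u, hu, hu0, hst⟩ := exists_isSteepest_of_cell hp hb
  exact ⟨u, hu, hu0, fun i hi => hst i _ ⟨hi, rfl⟩⟩

lemma IsActive.setOf_mem_nhds [FiniteDimensional ℝ E] [Finite X] (hx : IsActive A i x y)
    (huniq : ∀ x', IsActive A i x' y → x' = x) : {y' | IsActive A i x y'} ∈ 𝓝 y := by
  refine eventually_all.2 fun x' => ?_
  rcases eq_or_ne x' x with rfl | hne
  · exact Eventually.of_forall fun _ => le_rfl
  · have hlt : A i x' y < A i x y := (hx x').lt_of_ne fun h =>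
      hne (huniq x' fun w => h ▸ hx w)
    exact ((A i x').continuous_of_finiteDimensional.continuousAt.eventually_lt
      (A i x).continuous_of_finiteDimensional.continuousAt hlt).mono fun _ => le_of_lt

lemma IsTransverse.eq_of_isActive_of_finrank_lt [DecidableEq ι] [Nonempty X]
    [FiniteDimensional ℝ W] (hT : IsTransverse A W J p) (hlt : finrank ℝ W < J.card)
    (hp : p ∈ crossings A (J.erase j) D) (hw : IsActive A j w p) (hx : IsActive A j x p) :
    x = w := by
  by_contra hne
  have hpJ : p ∈ crossings A J D := ⟨hp.1, fun i hi => by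
    rcases eq_or_ne i j with rfl | hij
    · exact ⟨x, w, hne, hx, hw⟩
    · exact hp.2 i (Finset.mem_erase.2 ⟨hij, hi⟩)⟩
  obtain ⟨f, g, hfg⟩ := exists_isActivePair hpJ
  exact (hT.card_le_finrank hfg).not_gt hlt

lemma isGenericPiece_sep_isActive [DecidableEq ι] [FiniteDimensional ℝ E] [Finite X]
    [Nonempty X] (hT : ∀ y ∈ L, IsTransverse A L.direction J y)
    (hcard : J.card = finrank ℝ L.direction + 1)
    (hj : j ∈ J) (w : X) : IsGenericPiece A L (J.erase j) {y ∈ L | IsActive A j w y} where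
  isClosed := L.closed_of_finiteDimensional.inter (isClosed_setOf_isActive A j w)
  convex := L.convex.inter (convex_setOf_isActive A j w)
  subset _ hy := hy.1
  isTransverse y hy := (hT y hy.1).anti le_rfl (Finset.erase_subset _ _) fun _ _ _ h => h
  card_eq := by rw [Finset.card_erase_of_mem hj, hcard, Nat.add_sub_cancel]
  mem_nhdsWithin p hp := inter_mem self_mem_nhdsWithin <| mem_nhdsWithin_of_mem_nhds <|
    hp.1.2.setOf_mem_nhds fun _ hx =>
      (hT p hp.1.1).eq_of_isActive_of_finrank_lt (by omega) hp hp.1.2 hx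

/-- An unbounded region with label `w` of colour `j` meets every hyperplane on which `labelSlope`
is large, since it contains a ray along which `labelSlope` increases. -/
lemma IsCoercive.nonempty_region_slice [DecidableEq ι] [FiniteDimensional ℝ E] [Fintype X]
    (hco : IsCoercive A L.direction J) (hj : j ∈ J)
    (hB : ∃ y ∈ region A J L (Function.update v j w), labelSlope A j w y ≤ C)
    (hb : ¬ Bornology.IsBounded (region A J L (Function.update v j w))) :
    (region A (J.erase j) {y ∈ slice L (labelSlope A j w) C | IsActive A j w y} v).Nonempty := by
  obtain ⟨y, hy, hyC⟩ := hB
  obtain ⟨u, hu, hu0, hst⟩ := exists_isSteepest_of_region hb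
  have hpos : 0 < labelSlope A j w u :=
    hco.labelSlope_pos hj hu hu0 (by simpa using hst j hj)
  have hact : ∀ i ∈ J, IsActive A i (Function.update v j w i)
      (y + ((C - labelSlope A j w y) / labelSlope A j w u) • u) := fun i hi =>
    (hy.2 i hi).add_smul (hst i hi) (div_nonneg (sub_nonneg.2 hyC) hpos.le)
  refine ⟨_, ⟨add_smul_mem_slice hy.1 hu hpos.ne', by simpa using hact j hj⟩, fun i hi => ?_⟩
  obtain ⟨hij, hi⟩ := Finset.mem_erase.1 hi
  simpa [hij] using hact i hi

lemma IsCocycleAtInfinity.exists_eq_regionSum [DecidableEq ι] [FiniteDimensional ℝ E] [Finite ι]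
    [Fintype X] [Nonempty X] {z : (ι → X) → ZMod 2} (hz : IsCocycleAtInfinity A L J z)
    {L' : AffineSubspace ℝ E} (h : IsGenericPiece A L' (J.erase j) D) {T : Finset E}
    (hT : (T : Set E) = crossings A (J.erase j) D)
    (hne : ∀ v, ¬ Bornology.IsBounded (region A J L (Function.update v j w)) →
      (region A (J.erase j) D v).Nonempty) :
    ∃ c, ∀ v, z (Function.update v j w) = regionSum A (J.erase j) T c v := by
  refine h.exists_eq_regionSum hT (z := fun v => z (Function.update v j w)) (fun v i hi => ?_)
    (fun v hv => hz.eq_zero_of_isBounded _ ?_) fun v v' hvv' => hz.congr _ _ fun i hi => ?_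
  · obtain ⟨hij, hi⟩ := Finset.mem_erase.1 hi
    simp only [Function.update_comm hij]
    exact hz.isCocycle _ i hi
  · by_contra hb
    exact (hne v hb).ne_empty hv
  · rcases eq_or_ne i j with rfl | hij
    · simp
    · simpa [hij] using hvv' i (Finset.mem_erase.2 ⟨hij, hi⟩)

/-- If `labelSlope A j w` vanishes on `L`, no region with label `w` of colour `j` is unbounded. -/
lemma isEndSection_empty [DecidableEq ι] [FiniteDimensional ℝ E] [Fintype X]
    (hco : IsCoercive A L.direction J) (hj : j ∈ J)
    (h0 : ∀ u ∈ L.direction, labelSlope A j w u = 0) :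
    IsEndSection A L J j w ∅ 0 where
  mem_crossings := by simp
  isActive_iff := by simp
  dir_mem := by simp
  dir_ne_zero := by simp
  isSteepest := by simp
  labelSlope_eq := by simp
  exists_eq_regionSum z hz := ⟨0, fun v => by
    classical
    rw [regionSum, Finset.filter_empty, Finset.sum_empty]
    refine hz.eq_zero_of_isBounded _ ?_
    by_contra hb
    obtain ⟨u, hu, hu0, hst⟩ := exists_isSteepest_of_region hb
    exact (hco.labelSlope_pos hj hu hu0 (by simpa using hst j hj)).ne' (h0 u hu)⟩

lemma exists_isSteepest_of_mem_slice [FiniteDimensional ℝ E] {ξ : E →ₗ[ℝ] ℝ} {b c : ℝ} {p : E}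
    (hb : ∀ τ : ι → Set X, BddAbove (ξ '' cell A τ L) → ∀ y ∈ cell A τ (L : Set E), ξ y ≤ b)
    (hbc : b < c) (hp : p ∈ slice L ξ c) :
    ∃ u ∈ L.direction, u ≠ 0 ∧ ∀ i x, IsActive A i x p → IsSteepest A i x u := by
  obtain ⟨hpL, hpc⟩ := mem_slice.1 hp
  have hpτ : p ∈ cell A (fun i => {x | IsActive A i x p}) (L : Set E) := ⟨hpL, fun _ _ hx => hx⟩
  exact exists_isSteepest_of_cell hpτ fun hbd =>
    (hb _ (bddAbove_affineMap_image hbd ξ.toAffineMap) p hpτ).not_gt (hpc ▸ hbc)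

lemma IsGenericPiece.exists_isEndSection [DecidableEq ι] [FiniteDimensional ℝ E] [Finite ι]
    [Fintype X] [Nonempty X] (h : IsGenericPiece A L J L) (hco : IsCoercive A L.direction J)
    (hj : j ∈ J) (w : X) : ∃ T dir, IsEndSection A L J j w T dir := by
  set ξ := labelSlope A j w
  by_cases h0 : ∀ u ∈ L.direction, ξ u = 0
  · exact ⟨∅, 0, isEndSection_empty hco hj h0⟩
  push Not at h0
  obtain ⟨u, hu, hξu⟩ := h0
  obtain ⟨B, hB⟩ := exists_uniform_bound (fun τ : ι → Set X => cell A τ (L : Set E)) ξ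
  obtain ⟨C, hBC, hT⟩ := exists_gt_isTransverse_slice h.isTransverse hu hξu B
  have hcard : J.card = finrank ℝ (slice L ξ C).direction + 1 :=
    h.card_eq.trans (finrank_direction_slice_add_one hu hξu).symm
  have hD := isGenericPiece_sep_isActive hT hcard hj w
  set D : Set E := {y ∈ slice L ξ C | IsActive A j w y}
  have honly : ∀ p ∈ crossings A (J.erase j) D, ∀ x, IsActive A j x p ↔ x = w := fun p hp x =>
    ⟨(hT p hp.1.1).eq_of_isActive_of_finrank_lt (by omega) hp hp.1.2, fun hx => hx ▸ hp.1.2⟩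
  have hdir : ∀ p ∈ crossings A (J.erase j) D, ∃ u ∈ L.direction, u ≠ 0 ∧
      ∀ i x, IsActive A i x p → IsSteepest A i x u := fun p hp =>
    exists_isSteepest_of_mem_slice (fun τ => (hB τ).1) hBC hp.1.1
  choose! dir hmem hne hst using hdir
  have hfin := hD.finite_crossings
  refine ⟨hfin.toFinset, dir, ?_⟩
  simp only [← hfin.mem_toFinset] at honly hmem hne hst
  refine ⟨fun p hp => ?_, honly, hmem, hne, fun p hp i _ => hst p hp i, fun p hp p' hp' => ?_,
    fun z hz => hz.exists_eq_regionSum hD hfin.coe_toFinset fun v hb => ?_⟩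
  · rw [hfin.mem_toFinset] at hp
    exact ⟨slice_le hp.1.1, hp.2⟩
  · rw [hfin.mem_toFinset] at hp hp'
    exact (mem_slice.1 hp.1.1).2.trans (mem_slice.1 hp'.1.1).2.symm
  · refine hco.nonempty_region_slice hj ?_ hb
    have hne : (region A J (L : Set E) (Function.update v j w)).Nonempty :=
      Bornology.nonempty_of_not_isBounded hb
    rw [region_eq_cell] at hne ⊢
    obtain ⟨y, hy, hyB⟩ := (hB _).2 hne
    exact ⟨y, hy, hyB.trans hBC.le⟩

end Ends

section RayFamilies

variable {ι X E κ : Type*} [NormedAddCommGroup E] [InnerProductSpace ℝ E]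

/-- A family of distinct unbounded edges of the arrangement of colours `J` in `L`, the edge `k`
being the ray from `pos k` in the direction `dir k`. -/
structure IsRayFamily (A : ι → X → E →ᵃ[ℝ] ℝ) (L : AffineSubspace ℝ E) (J : Finset ι)
    (pos dir : κ → E) : Prop where
  pos_mem : ∀ k, pos k ∈ crossings A J L
  dir_mem : ∀ k, dir k ∈ L.direction
  dir_ne_zero : ∀ k, dir k ≠ 0
  isSteepest : ∀ k, ∀ i ∈ J, ∀ x, IsActive A i x (pos k) → IsSteepest A i x (dir k)
  inj : ∀ k l, ∀ s t : ℝ, 0 < s → dir l = s • dir k → pos l = pos k + t • dir k → k = l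

/-- A generic slice `b = C` of `L` crossed by exactly those rays of the family along which `b`
increases, and by no region of `L` on which `b` is bounded above. -/
structure IsFarSlice (A : ι → X → E →ᵃ[ℝ] ℝ) (L : AffineSubspace ℝ E) (J : Finset ι)
    (pos : κ → E) (b : E →ₗ[ℝ] ℝ) (C : ℝ) : Prop where
  isGenericPiece : IsGenericPiece A (slice L b C) J (slice L b C)
  pos_lt : ∀ k, b (pos k) < C
  region_lt : ∀ v, BddAbove (b '' region A J L v) → ∀ y ∈ region A J L v, b y < C

/-- The point where the line of the ray `k` meets the hyperplane `b = C`. -/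
noncomputable def landing (pos dir : κ → E) (b : E →ₗ[ℝ] ℝ) (C : ℝ) (k : κ) : E :=
  pos k + ((C - b (pos k)) / b (dir k)) • dir k

open scoped Classical in
/-- The coefficients `d` carried by the rays along which `b` increases, pushed forward to the points
where these rays meet the hyperplane `b = C`. -/
noncomputable def landingCoeff [Fintype κ] (pos dir : κ → E) (b : E →ₗ[ℝ] ℝ) (C : ℝ)
    (d : κ → ZMod 2) (q : E) : ZMod 2 :=
  ∑ k with 0 < b (dir k) ∧ landing pos dir b C k = q, d k

variable {A : ι → X → E →ᵃ[ℝ] ℝ} {L : AffineSubspace ℝ E} {J : Finset ι} {pos dir : κ → E}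
  {b : E →ₗ[ℝ] ℝ} {C : ℝ} {k k' : κ} {i : ι} {x : X} {v : ι → X} {u : E}

lemma exists_isFarSlice [FiniteDimensional ℝ E] [Finite ι] [Finite X] [Nonempty X] [Finite κ]
    (hT : ∀ y ∈ L, IsTransverse A L.direction J y) (hcard : J.card + 1 = finrank ℝ L.direction)
    (hu : u ∈ L.direction) (hbu : b u ≠ 0) (pos : κ → E) : ∃ C, IsFarSlice A L J pos b C := by
  obtain ⟨B, hB⟩ := exists_uniform_bound (fun v : ι → X => region A J (L : Set E) v) b
  obtain ⟨B', hB'⟩ := Finite.exists_le fun k => b (pos k)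
  obtain ⟨C, hBC, hTC⟩ := exists_gt_isTransverse_slice hT hu hbu (max B B')
  have hcardC := finrank_direction_slice_add_one (C := C) hu hbu
  exact ⟨C, isGenericPiece_self hTC (by omega),
    fun k => (hB' k).trans_lt ((le_max_right _ _).trans_lt hBC),
    fun v hv y hy => ((hB v).1 hv y hy).trans_lt ((le_max_left _ _).trans_lt hBC)⟩

/-- A region whose slice `b = C` is bounded contains no far point `y` with `b y > C`: following a
direction of recession along which `b` decreases, `y` would reach a far point of the slice. -/
lemma bddAbove_region_of_isBounded_slice [FiniteDimensional ℝ E]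
    (hco : IsCoercive A L.direction J) (hi : i ∈ J) (hu : u ∈ L.direction) (hbu : b u < 0)
    (hst : ∀ k ∈ J, IsSteepest A k (v k) u)
    (hbd : Bornology.IsBounded (region A J (slice L b C) v)) :
    BddAbove (b '' region A J (L : Set E) v) := by
  obtain ⟨x, hx⟩ := hco.exists_linear_lt hi hu (by rintro rfl; simp at hbu) (hst i hi)
  obtain ⟨M, hM⟩ := bddAbove_affineMap_image hbd (A i (v i) - A i x)
  set δ := (A i (v i)).linear u - (A i x).linear u
  refine ⟨max C (C + M / δ * -b u), ?_⟩
  rintro _ ⟨y, hy, rfl⟩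
  rcases le_or_gt (b y) C with hyC | hyC
  · exact hyC.trans (le_max_left _ _)
  refine le_trans ?_ (le_max_right _ _)
  set s := (C - b y) / b u with hs
  have hs0 : 0 ≤ s := div_nonneg_of_nonpos (by linarith) hbu.le
  have hmem : y + s • u ∈ region A J (slice L b C) v :=
    ⟨add_smul_mem_slice hy.1 hu hbu.ne, fun k hk => (hy.2 k hk).add_smul (hst k hk) hs0⟩
  have hsM : s * δ ≤ M := by
    have hle := hM (Set.mem_image_of_mem _ hmem)
    rw [affineMap_add_smul] at hle
    have hyx : A i x y ≤ A i (v i) y := hy.2 i hi x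
    simp only [AffineMap.coe_sub, Pi.sub_apply, AffineMap.sub_linear, LinearMap.sub_apply] at hle
    linarith
  have hsδ : s ≤ M / δ := (le_div_iff₀ (sub_pos.2 hx)).2 hsM
  have hby : b y - C = s * -b u := by rw [hs, mul_neg, div_mul_cancel₀ _ hbu.ne, neg_sub]
  have := mul_le_mul_of_nonneg_right hsδ (neg_nonneg.2 hbu.le)
  linarith

namespace IsRayFamily

variable (R : IsRayFamily A L J pos dir) (hC : IsFarSlice A L J pos b C)

include R hC

lemma isActive_landing (hk : 0 < b (dir k)) (hi : i ∈ J) (hx : IsActive A i x (pos k)) :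
    IsActive A i x (landing pos dir b C k) :=
  hx.add_smul (R.isSteepest k i hi x hx) (div_nonneg (sub_nonneg.2 (hC.pos_lt k).le) hk.le)

lemma landing_mem_crossings (hk : 0 < b (dir k)) :
    landing pos dir b C k ∈ crossings A J (slice L b C : Set E) :=
  ⟨add_smul_mem_slice (R.pos_mem k).1 (R.dir_mem k) hk.ne', fun i hi =>
    let ⟨x, x', hne, hx, hx'⟩ := (R.pos_mem k).2 i hi
    ⟨x, x', hne, R.isActive_landing hC hk hi hx, R.isActive_landing hC hk hi hx'⟩⟩

lemma isActive_landing_iff [FiniteDimensional ℝ E] [Nonempty X] (hk : 0 < b (dir k)) (hi : i ∈ J) :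
    IsActive A i x (landing pos dir b C k) ↔ IsActive A i x (pos k) := by
  refine ⟨fun hx => ?_, R.isActive_landing hC hk hi⟩
  obtain ⟨f, g, hfg⟩ := exists_isActivePair (R.pos_mem k)
  have hfg' : IsActivePair A J f g (landing pos dir b C k) := fun i hi =>
    ⟨(hfg i hi).1, R.isActive_landing hC hk hi (hfg i hi).2.1,
      R.isActive_landing hC hk hi (hfg i hi).2.2⟩
  have hT := hC.isGenericPiece.isTransverse _ (R.landing_mem_crossings hC hk).1
  rcases hT.eq_or_eq_of_isActive hfg' hC.isGenericPiece.card_eq hi hx with rfl | rfl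
  exacts [(hfg i hi).2.1, (hfg i hi).2.2]

lemma eq_of_landing_eq [FiniteDimensional ℝ E] [Nonempty X] (hk : 0 < b (dir k))
    (hk' : 0 < b (dir k')) (h : landing pos dir b C k = landing pos dir b C k') : k = k' := by
  have hp := R.landing_mem_crossings hC hk
  obtain ⟨f, g, hfg⟩ := exists_isActivePair hp
  have hflat : ∀ m, 0 < b (dir m) → landing pos dir b C m = landing pos dir b C k →
      ∀ i ∈ J, slopeDiff A f g i (dir m) = 0 := fun m hm hmk i hi => by
    obtain ⟨-, hf, hg⟩ := hfg i hi
    rw [← hmk, R.isActive_landing_iff hC hm hi] at hf hg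
    exact sub_eq_zero.2 ((R.isSteepest m i hi _ hg _).antisymm (R.isSteepest m i hi _ hf _))
  set s := b (dir k') / b (dir k) with hs
  have hdir : dir k' = s • dir k := sub_eq_zero.1 <|
    (hC.isGenericPiece.isTransverse _ hp.1).eq_zero_of_slopeDiff_eq_zero hfg
      hC.isGenericPiece.card_eq
      (by
        rw [direction_slice (R.dir_mem k) hk.ne']
        refine ⟨sub_mem (R.dir_mem k') (L.direction.smul_mem s (R.dir_mem k)), ?_⟩
        simp [hs, hk.ne'])
      fun i hi => by rw [map_sub, map_smul, hflat k hk rfl i hi, hflat k' hk' h.symm i hi]; simp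
  refine R.inj k k' s ((C - b (pos k)) / b (dir k) - (C - b (pos k')) / b (dir k') * s)
    (div_pos hk' hk) hdir ?_
  rw [landing, landing, ← sub_eq_iff_eq_add] at h
  rw [sub_smul, mul_smul, ← hdir, ← add_sub_assoc, h]

lemma landingCoeff_landing [FiniteDimensional ℝ E] [Nonempty X] [Fintype κ] (hk : 0 < b (dir k))
    (d : κ → ZMod 2) : landingCoeff pos dir b C d (landing pos dir b C k) = d k := by
  classical
  refine Finset.sum_eq_single_of_mem k (by simp [hk]) fun k' hk' hne => ?_
  obtain ⟨hpos, heq⟩ := (Finset.mem_filter.1 hk').2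
  exact absurd (R.eq_of_landing_eq hC hpos hk heq) hne

open scoped Classical in
lemma regionSum_landingCoeff [FiniteDimensional ℝ E] [Nonempty X] [Fintype κ] {S : Finset E}
    (hS : (S : Set E) = crossings A J (slice L b C : Set E)) (d : κ → ZMod 2) (v : ι → X) :
    regionSum A J S (landingCoeff pos dir b C d) v =
      ∑ k with 0 < b (dir k) ∧ ∀ i ∈ J, IsActive A i (v i) (pos k), d k := by
  have hiff : ∀ k q, 0 < b (dir k) ∧ landing pos dir b C k = q →
      ((∀ i ∈ J, IsActive A i (v i) q) ↔ ∀ i ∈ J, IsActive A i (v i) (pos k)) := by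
    rintro k _ ⟨hk, rfl⟩
    exact forall₂_congr fun i hi => R.isActive_landing_iff hC hk hi
  simp only [regionSum, landingCoeff]
  rw [← Finset.sum_fiberwise_of_maps_to (t := S.filter fun q => ∀ i ∈ J, IsActive A i (v i) q)
    (g := landing pos dir b C)]
  · refine Finset.sum_congr rfl fun q hq => ?_
    rw [Finset.filter_filter]
    refine Finset.sum_congr (Finset.filter_congr fun k _ => ?_) fun _ _ => rfl
    have hact := (Finset.mem_filter.1 hq).2
    exact ⟨fun h => ⟨⟨h.1, (hiff k q h).1 hact⟩, h.2⟩, fun h => ⟨h.1.1, h.2⟩⟩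
  · intro k hk
    obtain ⟨hpos, hact⟩ := (Finset.mem_filter.1 hk).2
    exact Finset.mem_filter.2 ⟨Finset.mem_coe.1 (hS ▸ R.landing_mem_crossings hC hpos),
      (hiff k _ ⟨hpos, rfl⟩).2 hact⟩

lemma dir_pos_of_isBounded [FiniteDimensional ℝ E] (hb : b (dir k) ≠ 0)
    (hco : IsCoercive A L.direction J) (hi : i ∈ J)
    (hne : (region A J (slice L b C : Set E) v).Nonempty)
    (hbd : Bornology.IsBounded (region A J (slice L b C : Set E) v))
    (hv : ∀ i ∈ J, IsActive A i (v i) (pos k)) : 0 < b (dir k) := by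
  by_contra! hle
  obtain ⟨y, hy, hact⟩ := hne
  obtain ⟨hyL, hyC⟩ := mem_slice.1 hy
  exact (hC.region_lt v (bddAbove_region_of_isBounded_slice hco hi (R.dir_mem k)
    (hle.lt_of_ne hb) (fun i hi => R.isSteepest k i hi _ (hv i hi)) hbd) y ⟨hyL, hact⟩).ne hyC

end IsRayFamily

end RayFamilies

section Cycles

variable {ι X E κ : Type*} [NormedAddCommGroup E] [InnerProductSpace ℝ E]

/-- Coefficients on the crossings of `J` in `L` whose sum over each bounded region vanishes. -/
def IsCycle (A : ι → X → E →ᵃ[ℝ] ℝ) (L : AffineSubspace ℝ E) (J : Finset ι) (S : Finset E)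
    (c : E → ZMod 2) : Prop :=
  ∀ v, Bornology.IsBounded (region A J L v) → regionSum A J S c v = 0

/-- The space of cycles has at most one nonzero element. For `J = ∅` the only region is `L`, a
point, which does not count as bounded. -/
def HasAtMostOneCycle (A : ι → X → E →ᵃ[ℝ] ℝ) (L : AffineSubspace ℝ E) (J : Finset ι)
    (S : Finset E) : Prop :=
  ∀ c c', (J.Nonempty → IsCycle A L J S c) → (J.Nonempty → IsCycle A L J S c') →
    Set.EqOn c 0 S ∨ Set.EqOn c' 0 S ∨ Set.EqOn c c' S

open scoped Classical in
/-- Coefficients on a family of rays such that those of the rays with given active labels sum to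
zero. -/
def IsBalanced [Fintype κ] (A : ι → X → E →ᵃ[ℝ] ℝ) (J : Finset ι) (pos : κ → E)
    (d : κ → ZMod 2) : Prop :=
  ∀ v : ι → X, ∑ k with ∀ i ∈ J, IsActive A i (v i) (pos k), d k = 0

variable {A : ι → X → E →ᵃ[ℝ] ℝ} {L : AffineSubspace ℝ E} {J : Finset ι} {S : Finset E}
  {pos dir : κ → E} {b : E →ₗ[ℝ] ℝ} {C : ℝ} {j : ι}

lemma IsBalanced.sub [Fintype κ] {d d' : κ → ZMod 2} (hd : IsBalanced A J pos d)
    (hd' : IsBalanced A J pos d') : IsBalanced A J pos (d - d') := fun v => by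
  simp only [Pi.sub_apply, Finset.sum_sub_distrib, hd v, hd' v, sub_zero]

namespace IsRayFamily

variable [FiniteDimensional ℝ E] [Nonempty X] [Fintype κ] {d d' : κ → ZMod 2}

lemma eq_zero_of_dir_neg [Finite ι] [Finite X] (R : IsRayFamily A L J pos dir)
    (hC : IsFarSlice A L J pos b C) (hd : IsBalanced A J pos d)
    (h0 : ∀ k, b (dir k) ≤ 0 → d k = 0) : d = 0 := by
  have hfin := hC.isGenericPiece.finite_crossings
  have hzero := hC.isGenericPiece.eqOn_zero_of_regionSum_eq_zero hfin.coe_toFinset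
    (c := landingCoeff pos dir b C d) fun v => by
      rw [R.regionSum_landingCoeff hC hfin.coe_toFinset, ← hd v]
      refine Finset.sum_subset (fun k hk => ?_) fun k hk hk' => h0 k (not_lt.1 fun hpos => hk' ?_)
      all_goals simp_all
  ext k
  rcases le_or_gt (b (dir k)) 0 with hk | hk
  · exact h0 k hk
  · rw [← R.landingCoeff_landing hC hk d]
    exact hzero (by simpa using R.landing_mem_crossings hC hk)

lemma isCycle_landingCoeff (R : IsRayFamily A L J pos dir) (hC : IsFarSlice A L J pos b C)
    (hb : ∀ k, b (dir k) ≠ 0) (hco : IsCoercive A L.direction J) (hJ : J.Nonempty)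
    (hS : (S : Set E) = crossings A J (slice L b C : Set E)) (hd : IsBalanced A J pos d) :
    IsCycle A (slice L b C) J S (landingCoeff pos dir b C d) := fun v hbd => by
  obtain ⟨i, hi⟩ := hJ
  classical
  rcases (region A J (slice L b C : Set E) v).eq_empty_or_nonempty with hem | hne
  · exact regionSum_eq_zero_of_region_eq_empty (hS.subset.trans fun _ hp => hp.1) hem
  · rw [R.regionSum_landingCoeff hC hS, ← hd v]
    refine Finset.sum_congr (Finset.filter_congr fun k _ => and_iff_right_of_imp fun hv => ?_)
      fun _ _ => rfl
    exact R.dir_pos_of_isBounded hC (hb k) hco hi hne hbd hv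

/-- Push the coefficients of the rays along which a generic `b` increases to a slice `b = C`, where
they are cycles of an arrangement of smaller dimension. The rays along which `b` decreases are
treated by a slice `-b = C'`, where balanced coefficients vanish if they vanish on the others. -/
lemma eq_zero_or_eq [Finite ι] [Finite X] (R : IsRayFamily A L J pos dir)
    (hT : ∀ y ∈ L, IsTransverse A L.direction J y) (hcard : J.card + 1 = finrank ℝ L.direction)
    (hco : IsCoercive A L.direction J)
    (ih : ∀ (L' : AffineSubspace ℝ E) (S : Finset E), IsGenericPiece A L' J L' →
      IsCoercive A L'.direction J → (S : Set E) = crossings A J L' → HasAtMostOneCycle A L' J S)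
    (hd : IsBalanced A J pos d) (hd' : IsBalanced A J pos d') : d = 0 ∨ d' = 0 ∨ d = d' := by
  rcases isEmpty_or_nonempty κ with hκ | ⟨⟨k₀⟩⟩
  · exact Or.inl (funext hκ.elim)
  obtain ⟨b, hb⟩ := Module.exists_dual_forall_apply_ne_zero (K := ℝ) dir R.dir_ne_zero
  obtain ⟨C, hC⟩ := exists_isFarSlice hT hcard (R.dir_mem k₀) (hb k₀) pos
  obtain ⟨C', hC'⟩ := exists_isFarSlice (b := -b) hT hcard (R.dir_mem k₀) (by simpa using hb k₀) pos
  have hfin := hC.isGenericPiece.finite_crossings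
  have hle : (slice L b C).direction ≤ L.direction := AffineSubspace.direction_le slice_le
  have hvanish : ∀ d, IsBalanced A J pos d → (∀ k, 0 < b (dir k) → d k = 0) → d = 0 :=
    fun d hd h0 => R.eq_zero_of_dir_neg hC' hd fun k hk =>
      h0 k ((hb k).symm.lt_of_le (by simpa using hk))
  have hland : ∀ {k}, 0 < b (dir k) → landing pos dir b C k ∈ (hfin.toFinset : Set E) :=
    fun hk => by simpa using R.landing_mem_crossings hC hk
  rcases ih _ hfin.toFinset hC.isGenericPiece (hco.anti hle subset_rfl) hfin.coe_toFinset
    (landingCoeff pos dir b C d) (landingCoeff pos dir b C d')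
    (fun hJ => R.isCycle_landingCoeff hC hb hco hJ hfin.coe_toFinset hd)
    (fun hJ => R.isCycle_landingCoeff hC hb hco hJ hfin.coe_toFinset hd') with h | h | h
  · exact Or.inl <| hvanish d hd fun k hk => by
      rw [← R.landingCoeff_landing hC hk d]; exact h (hland hk)
  · exact Or.inr <| Or.inl <| hvanish d' hd' fun k hk => by
      rw [← R.landingCoeff_landing hC hk d']; exact h (hland hk)
  · refine Or.inr <| Or.inr <| sub_eq_zero.1 <| hvanish _ (hd.sub hd') fun k hk => ?_
    rw [Pi.sub_apply, ← R.landingCoeff_landing hC hk d, ← R.landingCoeff_landing hC hk d',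
      h (hland hk), sub_self]

end IsRayFamily

lemma IsCycle.isCocycleAtInfinity [DecidableEq ι] [FiniteDimensional ℝ E] [Fintype X]
    [Nonempty X] {c : E → ZMod 2} (h : IsGenericPiece A L J L)
    (hS : (S : Set E) = crossings A J L) (hc : IsCycle A L J S c) :
    IsCocycleAtInfinity A L J (regionSum A J S c) where
  isCocycle := h.isCocycle_regionSum hS c
  congr _ _ := regionSum_congr
  eq_zero_of_isBounded := hc

lemma isRayFamily_of_isEndSection [DecidableEq ι] [Fintype X] {T : X → Finset E} {dir : X → E → E}
    (hT : ∀ w, IsEndSection A L J j w (T w) (dir w)) (hco : IsCoercive A L.direction J)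
    (hj : j ∈ J) :
    IsRayFamily A L (J.erase j) (fun k : Σ w, T w => (k.2 : E)) fun k => dir k.1 k.2 where
  pos_mem k := (hT k.1).mem_crossings _ k.2.2
  dir_mem k := (hT k.1).dir_mem _ k.2.2
  dir_ne_zero k := (hT k.1).dir_ne_zero _ k.2.2
  isSteepest k i hi := (hT k.1).isSteepest _ k.2.2 i (Finset.mem_of_mem_erase hi)
  inj := by
    rintro ⟨w, p, hp⟩ ⟨w', p', hp'⟩ s t hs hdir hpos
    dsimp only at hdir hpos
    have hsteep : IsSteepest A j w (dir w p) :=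
      (hT w).isSteepest p hp j hj w (((hT w).isActive_iff p hp w).2 rfl)
    have hsteep' : IsSteepest A j w' (dir w' p') :=
      (hT w').isSteepest p' hp' j hj w' (((hT w').isActive_iff p' hp' w').2 rfl)
    have hle : (A j w).linear (dir w p) ≤ (A j w').linear (dir w p) := by
      have := hsteep' w
      rw [hdir, map_smul, map_smul] at this
      exact le_of_mul_le_mul_left this hs
    have hle' : A j w p ≤ A j w' p := by
      have := ((hT w').isActive_iff p' hp' w').2 rfl w
      rw [hpos, affineMap_add_smul, affineMap_add_smul, (hsteep w').antisymm hle] at this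
      exact le_of_add_le_add_right this
    obtain rfl : w' = w := ((hT w).isActive_iff p hp w').1 fun x =>
      (((hT w).isActive_iff p hp w).2 rfl x).trans hle'
    have hslope : 0 < labelSlope A j w' (dir w' p) :=
      hco.labelSlope_pos hj ((hT w').dir_mem p hp) ((hT w').dir_ne_zero p hp) hsteep
    have hsame := (hT w').labelSlope_eq p hp p' hp'
    rw [hpos, map_add, map_smul, smul_eq_mul, left_eq_add, mul_eq_zero,
      or_iff_left hslope.ne'] at hsame
    simp [hpos, hsame]

lemma hasAtMostOneCycle_empty [FiniteDimensional ℝ E] (h : IsGenericPiece A L ∅ L)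
    (hS : (S : Set E) ⊆ L) : HasAtMostOneCycle A L ∅ S := fun c c' _ _ => by
  have hbot : L.direction = ⊥ := Submodule.finrank_eq_zero.1 h.card_eq.symm
  rcases S.eq_empty_or_nonempty with rfl | ⟨p₀, hp₀⟩
  · simp
  have hp : ∀ p ∈ (S : Set E), p = p₀ := fun p hp => sub_eq_zero.1 <| by
    simpa [hbot] using L.vsub_mem_direction (hS hp) (hS hp₀)
  have htri : ∀ a a' : ZMod 2, a = 0 ∨ a' = 0 ∨ a = a' := by decide
  exact (htri (c p₀) (c' p₀)).imp (fun h p hpS => hp p hpS ▸ h)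
    (Or.imp (fun h p hpS => hp p hpS ▸ h) fun h p hpS => hp p hpS ▸ h)

variable [FiniteDimensional ℝ E] [Nonempty X]

open scoped Classical in
/-- A cycle is a cocycle supported on the unbounded regions, so it is encoded by coefficients on the
rays of the sections at infinity, which are balanced because it is a cocycle. -/
lemma exists_isBalanced_coeff [DecidableEq ι] [Fintype X] {T : X → Finset E} {dir : X → E → E}
    {c : E → ZMod 2} (h : IsGenericPiece A L J L) (hj : j ∈ J) (hS : (S : Set E) = crossings A J L)
    (hT : ∀ w, IsEndSection A L J j w (T w) (dir w)) (hc : IsCycle A L J S c) :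
    ∃ d : (Σ w, T w) → ZMod 2, IsBalanced A (J.erase j) (fun k => (k.2 : E)) d ∧
      ∀ v w, regionSum A J S c (Function.update v j w) =
        ∑ p : T w with ∀ i ∈ J.erase j, IsActive A i (v i) p.1, d ⟨w, p⟩ := by
  choose d hd using fun w => (hT w).exists_eq_regionSum _ (hc.isCocycleAtInfinity h hS)
  have hd' : ∀ v w, regionSum A J S c (Function.update v j w) =
      ∑ p : T w with ∀ i ∈ J.erase j, IsActive A i (v i) p.1, d w p := fun v w => by
    rw [hd, regionSum, Finset.sum_filter, Finset.sum_filter, ← Finset.sum_coe_sort]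
  refine ⟨fun k => d k.1 k.2, fun v => ?_, hd'⟩
  rw [← h.isCocycle_regionSum hS c v j hj, Finset.sum_filter, Fintype.sum_sigma]
  simp only [hd', Finset.sum_filter]

lemma hasAtMostOneCycle_of_mem [DecidableEq ι] [Finite ι] [Finite X]
    (h : IsGenericPiece A L J L) (hco : IsCoercive A L.direction J) (hj : j ∈ J)
    (hS : (S : Set E) = crossings A J L)
    (ih : ∀ (L' : AffineSubspace ℝ E) (S : Finset E), IsGenericPiece A L' (J.erase j) L' →
      IsCoercive A L'.direction (J.erase j) → (S : Set E) = crossings A (J.erase j) L' →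
      HasAtMostOneCycle A L' (J.erase j) S) : HasAtMostOneCycle A L J S := fun c c' hc hc' => by
  classical
  cases nonempty_fintype X
  choose T dir hT using fun w => h.exists_isEndSection hco hj w
  have hne : J.Nonempty := ⟨j, hj⟩
  obtain ⟨d, hd, hcd⟩ := exists_isBalanced_coeff h hj hS hT (hc hne)
  obtain ⟨d', hd', hcd'⟩ := exists_isBalanced_coeff h hj hS hT (hc' hne)
  have hcard : (J.erase j).card + 1 = finrank ℝ L.direction :=
    (Finset.card_erase_add_one hj).trans h.card_eq
  rcases (isRayFamily_of_isEndSection hT hco hj).eq_zero_or_eq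
    (fun y hy => (h.isTransverse y hy).anti le_rfl (Finset.erase_subset _ _) fun _ _ _ hx => hx)
    hcard (hco.anti le_rfl (Finset.erase_subset _ _)) ih hd hd' with rfl | rfl | rfl
  · refine Or.inl <| h.eqOn_zero_of_regionSum_eq_zero hS fun v => ?_
    simpa using hcd v (v j)
  · refine Or.inr <| Or.inl <| h.eqOn_zero_of_regionSum_eq_zero hS fun v => ?_
    simpa using hcd' v (v j)
  · refine Or.inr <| Or.inr fun p hp => sub_eq_zero.1 <|
      h.eqOn_zero_of_regionSum_eq_zero (c := c - c') hS (fun v => ?_) hp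
    rw [regionSum_sub, ← Function.update_eq_self j v, hcd, hcd', sub_self]

theorem hasAtMostOneCycle [Finite ι] [Finite X] (h : IsGenericPiece A L J L)
    (hco : IsCoercive A L.direction J) (hS : (S : Set E) = crossings A J L) :
    HasAtMostOneCycle A L J S := by
  classical
  induction J using Finset.strongInduction generalizing L S with
  | H J ih =>
    rcases J.eq_empty_or_nonempty with rfl | ⟨j, hj⟩
    · exact hasAtMostOneCycle_empty h (hS.subset.trans fun _ hp => hp.1)
    · exact hasAtMostOneCycle_of_mem h hco hj hS fun L' S' h' hco' =>
        ih _ (Finset.erase_ssubset hj) h' hco'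

end Cycles

section LinearAlgebra

variable {α β : Type*} (Φ : (α → ZMod 2) →ₗ[ZMod 2] β → ZMod 2)

lemma card_le_card_add_finrank_ker [Fintype α] [Fintype β] :
    Fintype.card α ≤ Fintype.card β + finrank (ZMod 2) (LinearMap.ker Φ) := by
  have hrank := Φ.finrank_range_add_finrank_ker
  have hrange := (LinearMap.range Φ).finrank_le
  rw [finrank_fintype_fun_eq_card] at hrank hrange
  omega

lemma finrank_ker_le_one
    (h : ∀ c c', Φ c = 0 → Φ c' = 0 → c = 0 ∨ c' = 0 ∨ c = c') :
    finrank (ZMod 2) (LinearMap.ker Φ) ≤ 1 := by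
  rcases eq_or_ne (LinearMap.ker Φ) ⊥ with hbot | hbot
  · rw [hbot, finrank_bot]
    exact zero_le_one
  · obtain ⟨b, hb, hb0⟩ := Submodule.exists_mem_ne_zero_of_ne_bot hbot
    refine finrank_le_one ⟨b, hb⟩ fun ⟨c, hc⟩ => ?_
    rcases h c b hc hb with rfl | rfl | rfl
    · exact ⟨0, zero_smul _ _⟩
    · exact absurd rfl hb0
    · exact ⟨1, one_smul _ _⟩

lemma extend_eqOn_iff {α : Type*} {S : Finset α} {c c' : S → ZMod 2} :
    Set.EqOn (Function.extend Subtype.val c 0) (Function.extend Subtype.val c' 0) S ↔ c = c' := by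
  refine ⟨fun h => funext fun p => ?_, fun h => h ▸ fun _ _ => rfl⟩
  simpa [Subtype.val_injective.extend_apply] using h p.2

lemma extend_eqOn_zero_iff {α : Type*} {S : Finset α} {c : S → ZMod 2} :
    Set.EqOn (Function.extend Subtype.val c 0) (0 : α → ZMod 2) S ↔ c = 0 := by
  rw [← extend_eqOn_iff, show Function.extend Subtype.val (0 : S → ZMod 2) (0 : α → ZMod 2) = 0 from
    Function.extend_zero _]

end LinearAlgebra

section Counting

variable {ι X E : Type*} [NormedAddCommGroup E] [InnerProductSpace ℝ E]

open scoped Classical in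
/-- The region sums over the regions labelled by `T`, as a linear function of the coefficients. -/
noncomputable def regionSumOn (A : ι → X → E →ᵃ[ℝ] ℝ) (J : Finset ι) (S : Finset E)
    (T : Finset (ι → X)) : (S → ZMod 2) →ₗ[ZMod 2] T → ZMod 2 :=
  LinearMap.pi fun v => ∑ p ∈ S with ∀ i ∈ J, IsActive A i (v.1 i) p,
    LinearMap.proj p ∘ₗ Function.ExtendByZero.linearMap (ZMod 2) Subtype.val

variable {A : ι → X → E →ᵃ[ℝ] ℝ} {J : Finset ι} {S : Finset E} {T : Finset (ι → X)}

lemma regionSum_extend_eq_zero {c : S → ZMod 2} (hc : regionSumOn A J S T c = 0) :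
    ∀ v ∈ T, regionSum A J S (Function.extend Subtype.val c 0) v = 0 := fun v hv => by
  simpa [regionSumOn, regionSum] using congrFun hc ⟨v, hv⟩

lemma card_le_card_of_regionSum
    (h : ∀ c, (∀ v ∈ T, regionSum A J S c v = 0) → Set.EqOn c 0 S) : S.card ≤ T.card := by
  have hker : LinearMap.ker (regionSumOn A J S T) = ⊥ := LinearMap.ker_eq_bot'.2 fun c hc =>
    extend_eqOn_zero_iff.1 (h _ (regionSum_extend_eq_zero hc))
  have hcard := card_le_card_add_finrank_ker (regionSumOn A J S T)
  rwa [hker, finrank_bot, Fintype.card_coe, Fintype.card_coe] at hcard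

lemma card_le_card_add_one_of_regionSum
    (h : ∀ c c', (∀ v ∈ T, regionSum A J S c v = 0) → (∀ v ∈ T, regionSum A J S c' v = 0) →
      Set.EqOn c 0 S ∨ Set.EqOn c' 0 S ∨ Set.EqOn c c' S) : S.card ≤ T.card + 1 := by
  have hker := finrank_ker_le_one (regionSumOn A J S T) fun c c' hc hc' => by
    simpa only [extend_eqOn_iff, extend_eqOn_zero_iff] using
      h _ _ (regionSum_extend_eq_zero hc) (regionSum_extend_eq_zero hc')
  simpa using (card_le_card_add_finrank_ker (regionSumOn A J S T)).trans
    (Nat.add_le_add_left hker _)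

end Counting

section TieLocus

variable {ι X E : Type*} [NormedAddCommGroup E] [InnerProductSpace ℝ E]

/-- An arrangement of `dim E` tropical hypersurfaces meeting transversally everywhere, such that in
every direction each colour has labels of different slopes. -/
structure IsGenericArrangement [Fintype ι] (A : ι → X → E →ᵃ[ℝ] ℝ) : Prop where
  isTransverse : ∀ y, IsTransverse A ⊤ univ y
  card_eq : Fintype.card ι = finrank ℝ E
  isCoercive : IsCoercive A ⊤ univ

/-- The points at which the labels `f k` and `g k` are both active for every colour `k ∈ K`. -/
def tieLocus (A : ι → X → E →ᵃ[ℝ] ℝ) (K : Finset ι) (f g : ι → X) : Set E :=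
  {y | ∀ k ∈ K, IsActive A k (f k) y ∧ IsActive A k (g k) y}

/-- The directions along which `f k` and `g k` have the same slope for every colour `k ∈ K`. -/
noncomputable def tieDirection (A : ι → X → E →ᵃ[ℝ] ℝ) (K : Finset ι) (f g : ι → X) :
    Submodule ℝ E :=
  (LinearMap.ker (slopeDiffOn A ⊤ K f g)).map (⊤ : Submodule ℝ E).subtype

variable {A : ι → X → E →ᵃ[ℝ] ℝ} {J K : Finset ι} {f g v : ι → X} {p y u : E} {S : Finset E}

lemma mem_tieDirection : u ∈ tieDirection A K f g ↔ ∀ k ∈ K, slopeDiff A f g k u = 0 := by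
  simp [tieDirection, slopeDiffOn, funext_iff]

lemma tieLocus_eq_cell (A : ι → X → E →ᵃ[ℝ] ℝ) (K : Finset ι) (f g : ι → X) :
    tieLocus A K f g = cell A (fun k => {x | k ∈ K ∧ (x = f k ∨ x = g k)}) Set.univ := by
  ext y
  simp only [tieLocus, cell, Set.mem_ofPred_eq, Set.mem_univ, true_and, and_imp]
  exact ⟨fun h k x hk => by rintro (rfl | rfl); exacts [(h k hk).1, (h k hk).2],
    fun h k hk => ⟨h k _ hk (Or.inl rfl), h k _ hk (Or.inr rfl)⟩⟩

lemma tieLocus_empty : tieLocus A ∅ f g = Set.univ := by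
  simp [tieLocus]

lemma sub_mem_tieDirection (hp : p ∈ tieLocus A K f g) (hy : y ∈ tieLocus A K f g) :
    y - p ∈ tieDirection A K f g :=
  mem_tieDirection.2 fun k hk => by
    rw [slopeDiff, LinearMap.sub_apply, affineMap_linear_sub, affineMap_linear_sub,
      (hp k hk).1.eq (hp k hk).2, (hy k hk).1.eq (hy k hk).2, sub_self]

variable [Fintype ι]

lemma mem_crossings_univ_of_mem_tieLocus [DecidableEq ι] (hfg : ∀ k ∈ K, f k ≠ g k)
    (hp : p ∈ crossings A Kᶜ (tieLocus A K f g)) : p ∈ crossings A univ Set.univ := by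
  refine ⟨trivial, fun i _ => ?_⟩
  by_cases hi : i ∈ K
  · exact ⟨f i, g i, hfg i hi, hp.1 i hi⟩
  · exact hp.2 i (Finset.mem_compl.2 hi)

open scoped Classical in
/-- The labellings of the nonempty bounded regions of the tie locus of `K`, normalized to agree with
`f` on `K`. -/
noncomputable def boundedRegionLabels [DecidableEq ι] [Fintype X] (A : ι → X → E →ᵃ[ℝ] ℝ)
    (K : Finset ι) (f g : ι → X) : Finset (ι → X) :=
  {v | (∀ k ∈ K, v k = f k) ∧ (region A Kᶜ (tieLocus A K f g) v).Nonempty ∧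
    Bornology.IsBounded (region A Kᶜ (tieLocus A K f g) v)}

lemma mem_boundedRegionLabels [DecidableEq ι] [Fintype X] : v ∈ boundedRegionLabels A K f g ↔
    (∀ k ∈ K, v k = f k) ∧ (region A Kᶜ (tieLocus A K f g) v).Nonempty ∧
      Bornology.IsBounded (region A Kᶜ (tieLocus A K f g) v) := by
  classical exact mem_filter_univ v

namespace IsGenericArrangement

variable (h : IsGenericArrangement A)
include h

lemma isTransverse_tieLocus [DecidableEq ι] (hy : y ∈ tieLocus A K f g) :
    IsTransverse A (tieDirection A K f g) Kᶜ y := fun r => by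
  obtain ⟨u, -, s, hs⟩ := h.isTransverse y fun i x => if i ∈ K then 0 else r i x
  refine ⟨u, mem_tieDirection.2 fun k hk => ?_, s, fun i hi x hx => ?_⟩
  · rw [slopeDiff, LinearMap.sub_apply, hs k (mem_univ k) _ (hy k hk).1,
      hs k (mem_univ k) _ (hy k hk).2]
    simp [hk]
  · rw [hs i (mem_univ i) x hx, if_neg (Finset.mem_compl.1 hi)]

variable [FiniteDimensional ℝ E]

lemma isGenericPiece : IsGenericPiece A ⊤ univ ((⊤ : AffineSubspace ℝ E) : Set E) :=
  isGenericPiece_self (by simpa using h.isTransverse)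
    (by rw [AffineSubspace.direction_top, finrank_top, Finset.card_univ, h.card_eq])

lemma finite_crossings [Finite X] [Nonempty X] : (crossings A univ (Set.univ : Set E)).Finite := by
  simpa using h.isGenericPiece.finite_crossings

lemma eq_or_eq_of_isActive [Nonempty X] (hp : p ∈ crossings A univ Set.univ) {i : ι}
    {x x' x'' : X} (hne : x ≠ x') (hx : IsActive A i x p) (hx' : IsActive A i x' p)
    (hx'' : IsActive A i x'' p) : x'' = x ∨ x'' = x' := by
  classical
  obtain ⟨f, g, hfg⟩ := exists_isActivePair hp
  have hpair : IsActivePair A univ (Function.update f i x) (Function.update g i x') p :=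
    fun k hk => by
      rcases eq_or_ne k i with rfl | hki
      · simp [hne, hx, hx']
      · simpa [hki] using hfg k hk
  simpa using (h.isTransverse p).eq_or_eq_of_isActive hpair (by simpa using h.card_eq)
    (Finset.mem_univ i) hx''

variable [DecidableEq ι]

lemma card_compl_eq_finrank_tieDirection (hfg : ∀ k ∈ K, f k ≠ g k)
    (hy : y ∈ tieLocus A K f g) : Kᶜ.card = finrank ℝ (tieDirection A K f g) := by
  have htrans := (h.isTransverse y).anti le_rfl K.subset_univ fun _ _ _ => id
  have hsurj := htrans.slopeDiffOn_surjective (f := f) (g := g) fun k hk => ⟨hfg k hk, hy k hk⟩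
  have hrank := (slopeDiffOn A ⊤ K f g).finrank_range_add_finrank_ker
  rw [LinearMap.range_eq_top.2 hsurj, finrank_top, finrank_top, ← h.card_eq] at hrank
  simp only [finrank_fintype_fun_eq_card, Fintype.card_coe] at hrank
  rw [Finset.card_compl, tieDirection, Submodule.finrank_map_subtype_eq]
  omega

/-- At a crossing `p` only `f k` and `g k` are active for `k ∈ K`, and near `p` no other label can
become active; so the tie persists as long as `f k` and `g k` keep the same value. -/
lemma tieLocus_mem_nhdsWithin [Finite X] [Nonempty X] (hfg : ∀ k ∈ K, f k ≠ g k)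
    (hp : p ∈ crossings A Kᶜ (tieLocus A K f g)) :
    tieLocus A K f g ∈ 𝓝[AffineSubspace.mk' p (tieDirection A K f g)] p := by
  have hp' := mem_crossings_univ_of_mem_tieLocus hfg hp
  have hnear : ∀ k ∈ K, ∀ᶠ y in 𝓝 p, ∀ x, x = f k ∨ x = g k ∨ A k x y < A k (f k) y := by
    refine fun k hk => eventually_all.2 fun x => ?_
    by_cases hx : IsActive A k x p
    · rcases h.eq_or_eq_of_isActive hp' (hfg k hk) (hp.1 k hk).1 (hp.1 k hk).2 hx with rfl | rfl
      · exact Eventually.of_forall fun _ => Or.inl rfl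
      · exact Eventually.of_forall fun _ => Or.inr (Or.inl rfl)
    · have hlt : A k x p < A k (f k) p := lt_of_not_ge fun hle =>
        hx fun w => ((hp.1 k hk).1 w).trans hle
      filter_upwards [(A k x).continuous_of_finiteDimensional.continuousAt.eventually_lt
        (A k (f k)).continuous_of_finiteDimensional.continuousAt hlt] with y hy
      exact Or.inr (Or.inr hy)
  filter_upwards [nhdsWithin_le_nhds ((Finset.eventually_all K).2 hnear), self_mem_nhdsWithin]
    with y hy hyL k hk
  have htie : A k (f k) y = A k (g k) y := by
    have h0 := mem_tieDirection.1 (AffineSubspace.mem_mk'.1 hyL) k hk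
    rw [slopeDiff, LinearMap.sub_apply, vsub_eq_sub, affineMap_linear_sub, affineMap_linear_sub,
      (hp.1 k hk).1.eq (hp.1 k hk).2] at h0
    linarith
  have hmax : IsActive A k (f k) y := fun x => by
    rcases hy k hk x with rfl | rfl | hlt
    exacts [le_rfl, htie.ge, hlt.le]
  exact ⟨hmax, fun x => (hmax x).trans htie.le⟩

lemma isGenericPiece_tieLocus [Finite X] [Nonempty X] (hfg : ∀ k ∈ K, f k ≠ g k)
    (hy : y ∈ tieLocus A K f g) :
    IsGenericPiece A (AffineSubspace.mk' y (tieDirection A K f g)) Kᶜ (tieLocus A K f g) where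
  isClosed := tieLocus_eq_cell A K f g ▸ isClosed_cell A _ isClosed_univ
  convex := tieLocus_eq_cell A K f g ▸ convex_cell A _ convex_univ
  subset _ hy' := AffineSubspace.mem_mk'.2 (sub_mem_tieDirection hy hy')
  isTransverse _ hy' := by
    rw [AffineSubspace.direction_mk']; exact h.isTransverse_tieLocus hy'
  card_eq := by
    rw [AffineSubspace.direction_mk']; exact h.card_compl_eq_finrank_tieDirection hfg hy
  mem_nhdsWithin p hp := by
    have hpL : p ∈ AffineSubspace.mk' y (tieDirection A K f g) :=
      AffineSubspace.mem_mk'.2 (sub_mem_tieDirection hy hp.1)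
    have hL := AffineSubspace.mk'_eq hpL
    rw [AffineSubspace.direction_mk'] at hL
    rw [← hL]
    exact h.tieLocus_mem_nhdsWithin hfg hp

lemma card_crossings_le [Fintype X] [Nonempty X] (f g : ι → X)
    (hS : (S : Set E) = crossings A univ Set.univ) :
    S.card ≤ #(boundedRegionLabels A ∅ f g) + 1 := by
  refine card_le_card_add_one_of_regionSum (A := A) (J := univ) fun c c' hc hc' => ?_
  have hcycle : ∀ c : E → ZMod 2, (∀ v ∈ boundedRegionLabels A ∅ f g,
      regionSum A univ S c v = 0) → IsCycle A ⊤ univ S c := fun c hc v hv => by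
    rw [AffineSubspace.top_coe] at hv
    rcases (region A univ Set.univ v).eq_empty_or_nonempty with hem | hne
    · exact regionSum_eq_zero_of_region_eq_empty (Set.subset_univ _) hem
    · exact hc v (by simp [mem_boundedRegionLabels, tieLocus_empty, hne, hv])
  exact hasAtMostOneCycle h.isGenericPiece (by simpa using h.isCoercive) (by simpa using hS) c c'
    (fun _ => hcycle c hc) fun _ => hcycle c' hc'

/-- The label `f k` stays active along the ray, hence it is steepest among those of colour `k`. -/
lemma exists_ray_tieLocus [Fintype X] {k : ι} (hk : k ∈ K)
    (hy : y ∈ region A Kᶜ (tieLocus A K f g) v)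
    (hb : ¬ Bornology.IsBounded (region A Kᶜ (tieLocus A K f g) v)) :
    ∃ u, 0 < labelSlope A k (f k) u ∧
      ∀ t : ℝ, 0 ≤ t → y + t • u ∈ region A Kᶜ (tieLocus A K f g) v := by
  have hD := tieLocus_eq_cell A K f g
  obtain ⟨u, hu0, hu⟩ := exists_ray
    (convex_region (hD ▸ convex_cell A _ convex_univ))
    (isClosed_region (hD ▸ isClosed_cell A _ isClosed_univ)) hy hb
  exact ⟨u, h.isCoercive.labelSlope_pos (mem_univ k) trivial hu0
    (isSteepest_of_forall_isActive fun t ht => ((hu t ht).1 k hk).1), hu⟩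

lemma exists_slice_tieLocus [Finite X] [Nonempty X] (hfg : ∀ k ∈ K, f k ≠ g k)
    {ξ : E →ₗ[ℝ] ℝ} (hu : ξ u ≠ 0)
    (hray : ∀ v, ∀ y ∈ region A Kᶜ (tieLocus A K f g) v,
      ¬ Bornology.IsBounded (region A Kᶜ (tieLocus A K f g) v) →
      ∃ u, 0 < ξ u ∧ ∀ t : ℝ, 0 ≤ t → y + t • u ∈ region A Kᶜ (tieLocus A K f g) v) :
    ∃ C, crossings A Kᶜ (tieLocus A K f g ∩ slice ⊤ ξ C) = ∅ ∧
      ∀ v, region A Kᶜ (tieLocus A K f g ∩ slice ⊤ ξ C) v = ∅ →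
        Bornology.IsBounded (region A Kᶜ (tieLocus A K f g) v) := by
  cases nonempty_fintype X
  obtain ⟨B, hB⟩ := exists_uniform_bound (fun v => region A Kᶜ (tieLocus A K f g) v) ξ
  obtain ⟨C, hBC, hT⟩ := exists_gt_isTransverse_slice (L := ⊤)
    (fun y _ => by simpa using h.isTransverse y) (by simp) hu B
  refine ⟨C, Set.eq_empty_iff_forall_notMem.2 fun q hq => ?_, fun v hv => ?_⟩
  · obtain ⟨f', g', hfg'⟩ := exists_isActivePair
      (mem_crossings_univ_of_mem_tieLocus hfg ⟨hq.1.1, hq.2⟩)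
    have hle := (hT q hq.1.2).card_le_finrank hfg'
    have hdim := finrank_direction_slice_add_one (L := ⊤) (C := C) (by simp) hu
    rw [AffineSubspace.direction_top, finrank_top, ← h.card_eq] at hdim
    rw [Finset.card_univ] at hle
    omega
  · by_contra hb
    have hne : (region A Kᶜ (tieLocus A K f g) v).Nonempty :=
      Bornology.nonempty_of_not_isBounded hb
    obtain ⟨y, hy, hyB⟩ := (hB v).2 hne
    obtain ⟨u, hu, hur⟩ := hray v y hy hb
    have hy' := hur ((C - ξ y) / ξ u) (div_nonneg (by linarith) hu.le)
    exact Set.eq_empty_iff_forall_notMem.1 hv _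
      ⟨⟨hy'.1, add_smul_mem_slice trivial (by simp) hu.ne'⟩, hy'.2⟩

lemma eqOn_zero_of_regionSum_tieLocus_eq_zero [Finite X] [Nonempty X]
    (hK : K.Nonempty) (hfg : ∀ k ∈ K, f k ≠ g k)
    (hS : (S : Set E) = crossings A Kᶜ (tieLocus A K f g)) {c : E → ZMod 2}
    (hc : ∀ v, Bornology.IsBounded (region A Kᶜ (tieLocus A K f g) v) →
      regionSum A Kᶜ S c v = 0) : Set.EqOn c 0 S := fun p hp => by
  cases nonempty_fintype X
  have hpc : p ∈ crossings A Kᶜ (tieLocus A K f g) := hS ▸ hp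
  have hpiece := h.isGenericPiece_tieLocus hfg hpc.1
  obtain ⟨k, hk⟩ := hK
  have hray := fun v y => h.exists_ray_tieLocus (f := f) (g := g) (v := v) (y := y) hk
  refine hpiece.eqOn_zero_of_regionSum_eq_zero hS (fun v => ?_) hp
  by_cases hξ : ∃ u, labelSlope A k (f k) u ≠ 0
  · obtain ⟨u, hu⟩ := hξ
    obtain ⟨C, hcross, hbd⟩ := h.exists_slice_tieLocus hfg hu hray
    exact (hpiece.isCocycle_regionSum hS c).eq_zero
      (hpiece.isClosed.inter (slice ⊤ _ C).closed_of_finiteDimensional)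
      (hpiece.convex.inter (slice ⊤ _ C).convex) 0 (fun v hv => hc v (hbd v hv))
      (fun v q hq => absurd hq (hcross ▸ Set.notMem_empty q)) v
  · push Not at hξ
    refine hc v (by_contra fun hb => ?_)
    obtain ⟨y, hy⟩ : (region A Kᶜ (tieLocus A K f g) v).Nonempty :=
      Bornology.nonempty_of_not_isBounded hb
    obtain ⟨u, hu, -⟩ := hray v y hy hb
    exact hu.ne' (hξ u)

/-- For `K = ∅` the tie locus is the whole space, and the relation between the crossings of all
hypersurfaces provided by the cycle of `hasAtMostOneCycle` accounts for the extra `1`. -/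
theorem card_crossings_tieLocus_le [Fintype X] [Nonempty X] (hfg : ∀ k ∈ K, f k ≠ g k)
    (hS : (S : Set E) = crossings A Kᶜ (tieLocus A K f g)) :
    S.card ≤ #(boundedRegionLabels A K f g) + if K = ∅ then 1 else 0 := by
  rcases K.eq_empty_or_nonempty with rfl | hK
  · rw [compl_empty, tieLocus_empty] at hS
    exact h.card_crossings_le f g hS
  rw [if_neg hK.ne_empty, add_zero]
  refine card_le_card_of_regionSum (A := A) (J := Kᶜ) fun c hc =>
    h.eqOn_zero_of_regionSum_tieLocus_eq_zero hK hfg hS fun v hv => ?_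
  rcases (region A Kᶜ (tieLocus A K f g) v).eq_empty_or_nonempty with hem | hne
  · exact regionSum_eq_zero_of_region_eq_empty (hS.subset.trans fun _ hp => hp.1) hem
  have hvv' : ∀ i ∈ Kᶜ, v i = K.piecewise f v i := fun i hi =>
    (K.piecewise_eq_of_notMem f v (Finset.mem_compl.1 hi)).symm
  rw [regionSum_congr hvv']
  refine hc _ (mem_boundedRegionLabels.2 ⟨fun k hk => K.piecewise_eq_of_mem f v hk, ?_⟩)
  rw [← region_congr hvv']
  exact ⟨hne, hv⟩

end IsGenericArrangement

end TieLocus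

section HullSum

variable {ι X V : Type*} [AddCommGroup V] [Module ℝ V]

/-- The Minkowski sum over `I` of the convex hulls of the points `pt i x` with labels `x ∈ B i`. -/
def hullSum (pt : ι → X → V) (B : ι → Set X) (I : Finset ι) : Set V :=
  ∑ i ∈ I, convexHull ℝ (pt i '' B i)

variable {pt : ι → X → V} {B B' : ι → Set X} {I : Finset ι} {φ : V →ₗ[ℝ] ℝ} {c : ι → ℝ} {m : V}

lemma convex_hullSum (pt : ι → X → V) (B : ι → Set X) (I : Finset ι) :
    Convex ℝ (hullSum pt B I) :=
  convex_sum _ fun _ _ => convex_convexHull _ _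

lemma hullSum_mono (h : ∀ i, B i ⊆ B' i) (I : Finset ι) : hullSum pt B I ⊆ hullSum pt B' I :=
  Set.finsetSum_subset_finsetSum _ _ _ fun i _ => convexHull_mono (Set.image_mono (h i))

lemma sum_mem_hullSum {x : ι → X} (hx : ∀ i, x i ∈ B i) : ∑ i ∈ I, pt i (x i) ∈ hullSum pt B I :=
  Set.finsetSum_mem_finsetSum _ _ _ fun i _ => subset_convexHull _ _ ⟨x i, hx i, rfl⟩

lemma apply_le_of_mem_hullSum (h : ∀ i ∈ I, ∀ x ∈ B i, φ (pt i x) ≤ c i)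
    (hm : m ∈ hullSum pt B I) : φ m ≤ ∑ i ∈ I, c i := by
  obtain ⟨g, hg, rfl⟩ := (Set.mem_finsetSum _ _ _).1 hm
  rw [map_sum]
  refine sum_le_sum fun i hi => ?_
  exact convexHull_min (t := {m | φ m ≤ c i}) (Set.image_subset_iff.2 fun x hx => h i hi x hx)
    (convex_halfSpace_le φ.isLinear _) (hg hi)

lemma apply_eq_of_mem_hullSum (h : ∀ i ∈ I, ∀ x ∈ B i, φ (pt i x) = c i)
    (hm : m ∈ hullSum pt B I) : φ m = ∑ i ∈ I, c i := by
  refine le_antisymm (apply_le_of_mem_hullSum (fun i hi x hx => (h i hi x hx).le) hm) ?_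
  have := apply_le_of_mem_hullSum (φ := -φ) (c := -c) (fun i hi x hx => by simp [h i hi x hx]) hm
  simpa using this

end HullSum

section Volume

variable {ι X V : Type*} [NormedAddCommGroup V] [NormedSpace ℝ V]

lemma isCompact_hullSum [Finite X] (pt : ι → X → V) (B : ι → Set X) (I : Finset ι) :
    IsCompact (hullSum pt B I) := by
  classical
  unfold hullSum
  induction I using Finset.induction_on with
  | empty => simp
  | insert i I hi ih =>
    rw [sum_insert hi]
    exact (Set.Finite.isCompact_convexHull (𝕜 := ℝ) (Set.toFinite _)).add ih

variable [MeasurableSpace V] [BorelSpace V] [FiniteDimensional ℝ V] (μ : Measure V)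
  [μ.IsAddHaarMeasure]

lemma addHaar_setOf_linearMap_eq {φ : V →ₗ[ℝ] ℝ} (hφ : φ ≠ 0) (c : ℝ) : μ {m | φ m = c} = 0 := by
  have hne : (affineSpan ℝ {c}).comap φ.toAffineMap ≠ ⊤ := by
    refine fun htop => hφ (LinearMap.ext fun m => ?_)
    have hmem : ∀ m, φ m = c := fun m => by
      have : m ∈ (affineSpan ℝ {c}).comap φ.toAffineMap := htop ▸ AffineSubspace.mem_top ℝ V m
      simpa using this
    rw [LinearMap.zero_apply, hmem, ← hmem 0, map_zero]
  have := Measure.addHaar_affineSubspace μ _ hne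
  rwa [AffineSubspace.coe_comap, AffineSubspace.coe_affineSpan_singleton] at this

lemma addHaar_hullSum_eq_zero {pt : ι → X → V} {B : ι → Set X} {I : Finset ι} {φ : V →ₗ[ℝ] ℝ}
    (hφ : φ ≠ 0) (h : ∀ i ∈ I, ∀ x ∈ B i, ∀ x' ∈ B i, φ (pt i x) = φ (pt i x')) :
    μ (hullSum pt B I) = 0 := by
  have hc : ∀ i, ∃ c, i ∈ I → ∀ x ∈ B i, φ (pt i x) = c := by
    intro i
    rcases (B i).eq_empty_or_nonempty with hi | ⟨x, hx⟩
    · exact ⟨0, by simp [hi]⟩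
    · exact ⟨φ (pt i x), fun hI x' hx' => h i hI x' hx' x hx⟩
  choose c hc using hc
  exact measure_mono_null (fun m hm => apply_eq_of_mem_hullSum hc hm)
    (addHaar_setOf_linearMap_eq μ hφ (∑ i ∈ I, c i))

end Volume

section MaxValue

variable {ι X E : Type*} [NormedAddCommGroup E] [InnerProductSpace ℝ E] [Fintype X] [Nonempty X]
  {A : ι → X → E →ᵃ[ℝ] ℝ} {i : ι} {x : X} {y : E}

/-- The tropical polynomial `max_x A i x`. -/
noncomputable def maxValue (A : ι → X → E →ᵃ[ℝ] ℝ) (i : ι) (y : E) : ℝ :=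
  univ.sup' univ_nonempty fun x => A i x y

lemma le_maxValue (A : ι → X → E →ᵃ[ℝ] ℝ) (i : ι) (x : X) (y : E) : A i x y ≤ maxValue A i y :=
  le_sup' (fun x => A i x y) (mem_univ x)

lemma IsActive.maxValue_eq (h : IsActive A i x y) : maxValue A i y = A i x y :=
  le_antisymm (sup'_le _ _ fun w _ => h w) (le_maxValue A i x y)

lemma continuous_maxValue [FiniteDimensional ℝ E] (A : ι → X → E →ᵃ[ℝ] ℝ) (i : ι) :
    Continuous (maxValue A i) :=
  Continuous.finset_sup'_apply univ_nonempty fun x _ => (A i x).continuous_of_finiteDimensional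

end MaxValue

section GenericHeights

variable {ι X E : Type*} [NormedAddCommGroup E] [InnerProductSpace ℝ E]

/-- The arrangement of affine functions with linear parts `ℓ i x` and heights `ω i x`. -/
noncomputable def affineArrangement (ℓ : ι → X → E →ₗ[ℝ] ℝ) (ω : ι → X → ℝ) (i : ι) (x : X) :
    E →ᵃ[ℝ] ℝ :=
  (ℓ i x).toAffineMap + AffineMap.const ℝ E (ω i x)

variable {ℓ : ι → X → E →ₗ[ℝ] ℝ} {ω : ι → X → ℝ}

lemma affineArrangement_apply (i : ι) (x : X) (y : E) :
    affineArrangement ℓ ω i x y = ℓ i x y + ω i x := rfl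

@[simp] lemma affineArrangement_linear (i : ι) (x : X) :
    (affineArrangement ℓ ω i x).linear = ℓ i x := by
  simp [affineArrangement]

/-- The heights which, on the labels of the pattern `τ`, agree up to a constant for each colour
with the slopes `ℓ i x u` in some direction `u`. -/
def solvableHeights (ℓ : ι → X → E →ₗ[ℝ] ℝ) (τ : ι → Set X) : Submodule ℝ (ι → X → ℝ) where
  carrier := {r | ∃ (u : E) (s : ι → ℝ), ∀ i, ∀ x ∈ τ i, ℓ i x u = r i x + s i}
  zero_mem' := ⟨0, 0, by simp⟩
  add_mem' := by
    rintro r r' ⟨u, s, h⟩ ⟨u', s', h'⟩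
    refine ⟨u + u', s + s', fun i x hx => ?_⟩
    simp only [map_add, h i x hx, h' i x hx, Pi.add_apply]
    ring
  smul_mem' := by
    rintro a r ⟨u, s, h⟩
    refine ⟨a • u, a • s, fun i x hx => ?_⟩
    simp only [map_smul, h i x hx, Pi.smul_apply, smul_eq_mul]
    ring

lemma heights_mem_solvableHeights [Finite X] [Nonempty X] (ℓ : ι → X → E →ₗ[ℝ] ℝ)
    (ω : ι → X → ℝ) (y : E) :
    ω ∈ solvableHeights ℓ fun i => {x | IsActive (affineArrangement ℓ ω) i x y} := by
  choose z hz using fun i => exists_isActive (affineArrangement ℓ ω) i y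
  refine ⟨-y, fun i => -affineArrangement ℓ ω i (z i) y, fun i x hx => ?_⟩
  have := IsActive.eq hx (hz i)
  rw [affineArrangement_apply] at this
  rw [map_neg]
  linarith

/-- If `ω` avoids the finitely many proper subspaces `solvableHeights ℓ τ`, then every point is
transverse, since `ω` itself is solvable on the active labels of that point. -/
lemma exists_isTransverse_affineArrangement [Fintype ι] [Finite X] [Nonempty X]
    (ℓ : ι → X → E →ₗ[ℝ] ℝ) : ∃ ω, ∀ y, IsTransverse (affineArrangement ℓ ω) ⊤ univ y := by
  have hfin : {τ : ι → Set X | solvableHeights ℓ τ ≠ ⊤}.Finite := Set.toFinite _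
  have hne := Subspace.biUnion_ne_univ_of_top_notMem
    (s := hfin.toFinset.image (solvableHeights ℓ)) (by simp)
  obtain ⟨ω, hω⟩ := (Set.ne_univ_iff_exists_notMem _).1 hne
  refine ⟨ω, fun y r => ?_⟩
  have htop : solvableHeights ℓ (fun i => {x | IsActive (affineArrangement ℓ ω) i x y}) = ⊤ := by
    by_contra h
    refine hω (Set.mem_biUnion ?_ (heights_mem_solvableHeights ℓ ω y))
    simpa using ⟨_, h, rfl⟩
  obtain ⟨u, s, hus⟩ := htop ▸ Submodule.mem_top (x := r)
  exact ⟨u, trivial, s, fun i _ x hx => by simpa using hus i x hx⟩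

end GenericHeights

section Pairing

variable {n : ℕ}

/-- The pairing between `ℝⁿ`, which contains the polytopes, and its dual space
`EuclideanSpace ℝ (Fin n)`, which contains the tropical hypersurfaces. -/
noncomputable def pairing (n : ℕ) : (Fin n → ℝ) →ₗ[ℝ] EuclideanSpace ℝ (Fin n) →ₗ[ℝ] ℝ :=
  innerₗ _ ∘ₗ (WithLp.linearEquiv 2 ℝ (Fin n → ℝ)).symm.toLinearMap

lemma pairing_ofLp_self (y : EuclideanSpace ℝ (Fin n)) : pairing n y.ofLp y = ‖y‖ ^ 2 :=
  real_inner_self_eq_norm_sq y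

lemma pairing_flip_ne_zero {u : EuclideanSpace ℝ (Fin n)} (hu : u ≠ 0) :
    (pairing n).flip u ≠ 0 := by
  intro h
  have := LinearMap.congr_fun h u.ofLp
  rw [LinearMap.flip_apply, pairing_ofLp_self] at this
  simp [hu] at this

lemma exists_eq_pairing_flip (φ : (Fin n → ℝ) →ₗ[ℝ] ℝ) : ∃ u, φ = (pairing n).flip u := by
  have hinj : Function.Injective (pairing n).flip :=
    (injective_iff_map_eq_zero _).2 fun u hu => by_contra fun h => pairing_flip_ne_zero h hu
  obtain ⟨u, hu⟩ := (LinearMap.injective_iff_surjective_of_finrank_eq_finrank (by simp)).1 hinj φ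
  exact ⟨u, hu.symm⟩

end Pairing

section SubdivisionVertices

variable {ι X E : Type*} [NormedAddCommGroup E] [InnerProductSpace ℝ E]

/-- The points at which the active slopes of all colours span the dual space; they are dual to the
full-dimensional cells of the mixed subdivision. -/
def subdivisionVertices (A : ι → X → E →ᵃ[ℝ] ℝ) : Set E :=
  {y | ∀ u, (∀ i x x', IsActive A i x y → IsActive A i x' y →
    (A i x).linear u = (A i x').linear u) → u = 0}

lemma finite_subdivisionVertices [Finite ι] [Finite X] (A : ι → X → E →ᵃ[ℝ] ℝ) :
    (subdivisionVertices A).Finite := by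
  refine Set.Finite.of_injOn (f := fun y i => {x | IsActive A i x y}) (Set.mapsTo_univ _ _) ?_
    Set.finite_univ
  intro y hy z _ heq
  have hiff : ∀ i x, IsActive A i x y ↔ IsActive A i x z := fun i x =>
    Set.ext_iff.1 (congrFun heq i) x
  refine sub_eq_zero.1 (hy _ fun i x x' hx hx' => ?_)
  rw [affineMap_linear_sub, affineMap_linear_sub, hx.eq hx',
    ((hiff i x).1 hx).eq ((hiff i x').1 hx')]

end SubdivisionVertices

section Subdivision

variable {ι X : Type*} {n : ℕ} [Nonempty X] {pt : ι → X → Fin n → ℝ}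
  {ω : ι → X → ℝ} {I : Finset ι} {m : Fin n → ℝ} {y z : EuclideanSpace ℝ (Fin n)}

/-- The arrangement of the functions `y ↦ ⟨pt i x, y⟩ + ω i x`, dual to the points `pt i x` lifted
to the heights `ω i x`. -/
noncomputable abbrev dualArrangement (pt : ι → X → Fin n → ℝ) (ω : ι → X → ℝ) :
    ι → X → EuclideanSpace ℝ (Fin n) →ᵃ[ℝ] ℝ :=
  affineArrangement (fun i x => pairing n (pt i x)) ω

/-- The cell dual to `y` of the mixed subdivision of the Minkowski sum of the point sets of the
colours in `I`. -/
def dualCell (pt : ι → X → Fin n → ℝ) (ω : ι → X → ℝ) (I : Finset ι)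
    (y : EuclideanSpace ℝ (Fin n)) : Set (Fin n → ℝ) :=
  hullSum pt (fun i => {x | IsActive (dualArrangement pt ω) i x y}) I

lemma pairing_sub_le [Fintype X] (hm : m ∈ dualCell pt ω I y) (z : EuclideanSpace ℝ (Fin n)) :
    pairing n m (z - y) ≤
      ∑ i ∈ I, (maxValue (dualArrangement pt ω) i z - maxValue (dualArrangement pt ω) i y) := by
  refine apply_le_of_mem_hullSum (φ := (pairing n).flip (z - y)) (fun i _ x hx => ?_) hm
  have h := affineMap_linear_sub (dualArrangement pt ω i x) z y
  rw [affineArrangement_linear] at h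
  rw [LinearMap.flip_apply, h, IsActive.maxValue_eq hx]
  exact sub_le_sub_right (le_maxValue _ i x z) _

lemma volume_dualCell_inter_dualCell [Finite X] (h : y ≠ z) :
    volume (dualCell pt ω I y ∩ dualCell pt ω I z) = 0 := by
  cases nonempty_fintype X
  refine measure_mono_null ?_ (addHaar_setOf_linearMap_eq volume
    (pairing_flip_ne_zero (sub_ne_zero.2 h.symm))
    (∑ i ∈ I, (maxValue (dualArrangement pt ω) i z - maxValue (dualArrangement pt ω) i y)))
  rintro m ⟨hy, hz⟩
  have hyz := pairing_sub_le hz y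
  have hzy := pairing_sub_le hy z
  rw [← neg_sub z y, map_neg] at hyz
  rw [Set.mem_ofPred_eq, LinearMap.flip_apply]
  rw [sum_sub_distrib] at hyz hzy ⊢
  linarith

lemma exists_mul_norm_sub_le [Fintype X]
    (hm : m ∈ interior (hullSum pt (fun _ => Set.univ) I)) :
    ∃ δ > 0, ∃ C, ∀ y : EuclideanSpace ℝ (Fin n),
      δ * ‖y‖ - C ≤ ∑ i ∈ I, maxValue (dualArrangement pt ω) i y - pairing n m y := by
  obtain ⟨ε, hε, hball⟩ := Metric.mem_nhds_iff.1 (mem_interior_iff_mem_nhds.1 hm)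
  refine ⟨ε / 2, half_pos hε, ∑ i ∈ I, ∑ x, |ω i x|, fun y => ?_⟩
  have hmem : m + (ε / 2) • ‖y‖⁻¹ • y.ofLp ∈ hullSum pt (fun _ => Set.univ) I := by
    refine hball (mem_ball_iff_norm.2 ?_)
    have hnorm : ‖‖y‖⁻¹ • y.ofLp‖ ≤ 1 := by
      rw [norm_smul, norm_inv, norm_norm]
      exact inv_mul_le_one_of_le₀
        ((pi_norm_le_iff_of_nonneg (norm_nonneg y)).2 (PiLp.norm_apply_le y)) (norm_nonneg y)
    rw [add_sub_cancel_left, norm_smul, Real.norm_of_nonneg (half_pos hε).le]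
    nlinarith
  have hle : ∀ i ∈ I, ∀ x ∈ Set.univ, (pairing n).flip y (pt i x) ≤
      maxValue (dualArrangement pt ω) i y + ∑ x, |ω i x| := fun i _ x _ => by
    have hmax := le_maxValue (dualArrangement pt ω) i x y
    have hω := single_le_sum (f := fun x => |ω i x|) (fun x _ => abs_nonneg _) (mem_univ x)
    rw [affineArrangement_apply] at hmax
    rw [LinearMap.flip_apply]
    linarith [neg_abs_le (ω i x)]
  have hpair : (pairing n).flip y (m + (ε / 2) • ‖y‖⁻¹ • y.ofLp) =
      pairing n m y + ε / 2 * ‖y‖ := by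
    rw [LinearMap.flip_apply, map_add, map_smul, map_smul, LinearMap.add_apply,
      LinearMap.smul_apply, LinearMap.smul_apply, pairing_ofLp_self, smul_eq_mul, smul_eq_mul]
    rcases eq_or_ne ‖y‖ 0 with hy | _
    · simp [hy]
    · field_simp
  have := apply_le_of_mem_hullSum hle hmem
  rw [hpair, sum_add_distrib] at this
  linarith

lemma exists_forall_isMin [Fintype X]
    (hm : m ∈ interior (hullSum pt (fun _ => Set.univ) I)) :
    ∃ y, ∀ z, ∑ i ∈ I, maxValue (dualArrangement pt ω) i y - pairing n m y ≤
      ∑ i ∈ I, maxValue (dualArrangement pt ω) i z - pairing n m z := by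
  obtain ⟨δ, hδ, C, hle⟩ := exists_mul_norm_sub_le (ω := ω) hm
  refine Continuous.exists_forall_le ?_ (tendsto_atTop_mono hle ?_)
  · exact (continuous_finsetSum _ fun i _ => continuous_maxValue _ i).sub
      (pairing n m).continuous_of_finiteDimensional
  · exact tendsto_atTop_add_const_right _ _
      ((tendsto_norm_cocompact_atTop (E := EuclideanSpace ℝ (Fin n))).const_mul_atTop hδ)

/-- A hyperplane separating `m` from the dual cell of the minimizer `y` would be a direction of
descent. -/
lemma exists_mem_dualCell [Finite ι] [Finite X]
    (hm : m ∈ interior (hullSum pt (fun _ => Set.univ) I)) : ∃ y, m ∈ dualCell pt ω I y := by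
  cases nonempty_fintype X
  obtain ⟨y, hy⟩ := exists_forall_isMin (ω := ω) hm
  refine ⟨y, by_contra fun hmem => ?_⟩
  obtain ⟨φ, s, hlt, hs⟩ := geometric_hahn_banach_closed_point (convex_hullSum _ _ I)
    (isCompact_hullSum _ _ I).isClosed hmem
  obtain ⟨u, hu⟩ := exists_eq_pairing_flip (φ : (Fin n → ℝ) →ₗ[ℝ] ℝ)
  replace hu : ∀ m, φ m = pairing n m u := fun m => LinearMap.congr_fun hu m
  have hsteep : ∀ i, ∃ x, IsActive (dualArrangement pt ω) i x y ∧
      ∀ w, IsActive (dualArrangement pt ω) i w y → pairing n (pt i w) u ≤ pairing n (pt i x) u := by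
    intro i
    obtain ⟨x, hx, hmax⟩ := Set.exists_max_image {x | IsActive (dualArrangement pt ω) i x y}
      (fun x => pairing n (pt i x) u) (Set.toFinite _) (exists_isActive _ i y)
    exact ⟨x, hx, hmax⟩
  choose x hx hmax using hsteep
  have hev : ∀ᶠ t in 𝓝[>] (0 : ℝ), ∀ i, IsActive (dualArrangement pt ω) i (x i) (y + t • u) :=
    eventually_all.2 fun i => (hx i).eventually_add_smul fun w hw => by simpa using hmax i w hw
  obtain ⟨t, ht, ht0⟩ := (hev.and self_mem_nhdsWithin).exists
  have hdescent : ∑ i ∈ I, maxValue (dualArrangement pt ω) i (y + t • u) =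
      ∑ i ∈ I, maxValue (dualArrangement pt ω) i y + t * φ (∑ i ∈ I, pt i (x i)) := by
    rw [map_sum, mul_sum, ← sum_add_distrib]
    refine sum_congr rfl fun i _ => ?_
    rw [(ht i).maxValue_eq, (hx i).maxValue_eq, affineMap_add_smul, affineArrangement_linear, hu]
  have hmin := hy (y + t • u)
  rw [hdescent, map_add, map_smul, smul_eq_mul, ← hu] at hmin
  have := mul_lt_mul_of_pos_left ((hlt _ (sum_mem_hullSum hx)).trans hs) (Set.mem_Ioi.1 ht0)
  linarith

lemma hullSum_univ_subset [Finite ι] [Finite X]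
    (hvert : (subdivisionVertices (dualArrangement pt ω)).Finite) :
    hullSum pt (fun _ => Set.univ) I ⊆ (⋃ y ∈ hvert.toFinset, dualCell pt ω I y) ∪
      ((⋃ τ ∈ {τ : ι → Set X | ∃ u ≠ 0, ∀ i, ∀ x ∈ τ i, ∀ x' ∈ τ i,
        (pairing n).flip u (pt i x) = (pairing n).flip u (pt i x')}, hullSum pt τ I) ∪
      frontier (hullSum pt (fun _ => Set.univ) I)) := by
  intro m hm
  by_cases hint : m ∈ interior (hullSum pt (fun _ => Set.univ) I)
  · obtain ⟨y, hy⟩ := exists_mem_dualCell (ω := ω) hint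
    by_cases hvertex : y ∈ subdivisionVertices (dualArrangement pt ω)
    · exact Or.inl (Set.mem_biUnion (hvert.mem_toFinset.2 hvertex) hy)
    · simp only [subdivisionVertices, Set.mem_ofPred_eq, affineArrangement_linear] at hvertex
      push Not at hvertex
      obtain ⟨u, hu, hu0⟩ := hvertex
      exact Or.inr (Or.inl (Set.mem_biUnion ⟨u, hu0, fun i x hx x' hx' => hu i x x' hx hx'⟩ hy))
  · exact Or.inr (Or.inr ⟨subset_closure hm, hint⟩)

lemma volume_hullSum_univ [Finite ι] [Finite X] (pt : ι → X → Fin n → ℝ) (ω : ι → X → ℝ)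
    (I : Finset ι) :
    volume (hullSum pt (fun _ => Set.univ) I) =
      ∑ y ∈ (finite_subdivisionVertices (dualArrangement pt ω)).toFinset,
        volume (dualCell pt ω I y) := by
  rw [← measure_biUnion_finset₀ (fun y _ z _ h => volume_dualCell_inter_dualCell h)
    fun y _ => (isCompact_hullSum _ _ I).isClosed.measurableSet.nullMeasurableSet]
  refine le_antisymm ?_ (measure_mono (Set.iUnion₂_subset fun y _ =>
    hullSum_mono (fun i => Set.subset_univ _) I))
  refine (measure_mono (hullSum_univ_subset (ω := ω) (finite_subdivisionVertices _))).trans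
    ((measure_union_le _ _).trans (le_of_eq ?_))
  rw [measure_union_null ?_ ((convex_hullSum _ _ I).addHaar_frontier volume), add_zero]
  refine (measure_biUnion_null_iff (Set.to_countable _)).2 ?_
  rintro τ ⟨u, hu, h⟩
  exact addHaar_hullSum_eq_zero volume (pairing_flip_ne_zero hu) fun i _ => h i

end Subdivision

section IntegerLattice

/-- The lattice `ℤⁿ` in `ℝⁿ`. -/
def integerLattice (n : ℕ) : AddSubgroup (Fin n → ℝ) :=
  ((Int.castAddHom ℝ).compLeft (Fin n)).range

variable {n : ℕ}

lemma mem_integerLattice {x : Fin n → ℝ} :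
    x ∈ integerLattice n ↔ ∃ z : Fin n → ℤ, (fun i => (z i : ℝ)) = x := Iff.rfl

lemma isLatticePt_iff {x : Fin n → ℝ} : IsLatticePt x ↔ x ∈ integerLattice n :=
  ⟨fun h => by choose z hz using h; exact ⟨z, funext fun i => (hz i).symm⟩,
    fun ⟨z, hz⟩ i => ⟨z i, (congrFun hz i).symm⟩⟩

lemma vecMul_mem_integerLattice {M : Matrix (Fin n) (Fin n) ℝ} (hM : ∀ i, M i ∈ integerLattice n)
    (z : Fin n → ℤ) : Matrix.vecMul (fun i => (z i : ℝ)) M ∈ integerLattice n := by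
  rw [Matrix.vecMul_eq_sum]
  exact sum_mem fun i _ => by
    simpa only [Int.cast_smul_eq_zsmul] using zsmul_mem (hM i) (z i)

lemma det_vecMulLinear {ι R : Type*} [Fintype ι] [DecidableEq ι] [CommRing R] (M : Matrix ι ι R) :
    LinearMap.det M.vecMulLinear = M.det := by
  rw [← Matrix.mulVecLin_transpose, ← Matrix.toLin'_apply', LinearMap.det_toLin',
    Matrix.det_transpose]

lemma natCard_quotient_range_vecMulLinear {ι : Type*} [Fintype ι] [DecidableEq ι]
    {N : Matrix ι ι ℤ} (hN : N.det ≠ 0) :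
    Nat.card ((ι → ℤ) ⧸ LinearMap.range N.vecMulLinear) = N.det.natAbs := by
  have hinj : Function.Injective N.vecMulLinear :=
    (injective_iff_map_eq_zero _).2 fun z hz => Matrix.eq_zero_of_vecMul_eq_zero hN hz
  rw [← det_vecMulLinear N]
  exact (Submodule.natAbs_det_equiv _ (LinearEquiv.ofInjective _ hinj)).symm

lemma exists_abs_det_le_card {M : Matrix (Fin n) (Fin n) ℝ} (hM : ∀ i, M i ∈ integerLattice n) :
    ∃ Λ : Finset (Fin n → ℝ), |M.det| ≤ Λ.card ∧
      ∀ t ∈ Λ, (∀ i, t i ∈ Set.Ico 0 1) ∧ Matrix.vecMul t M ∈ integerLattice n := by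
  by_cases hdet : M.det = 0
  · exact ⟨∅, by simp [hdet]⟩
  choose N hN using fun i => mem_integerLattice.1 (hM i)
  obtain rfl : (Matrix.of N).map (Int.castRingHom ℝ) = M := Matrix.ext fun i j => congrFun (hN i) j
  set M := (Matrix.of N).map (Int.castRingHom ℝ) with hMN
  have hdetM : M.det = (Matrix.of N).det := ((Int.castRingHom ℝ).map_det _).symm
  have hcard := natCard_quotient_range_vecMulLinear (N := Matrix.of N)
    fun h => hdet (by rw [hdetM, h, Int.cast_zero])
  let coeff (z : Fin n → ℤ) : Fin n → ℝ := Matrix.vecMul (fun i => (z i : ℝ)) M⁻¹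
  have hcoeff (z) : Matrix.vecMul (coeff z) M = fun i => (z i : ℝ) := by
    rw [Matrix.vecMul_vecMul, Matrix.nonsing_inv_mul _ (isUnit_iff_ne_zero.2 hdet),
      Matrix.vecMul_one]
  let t (q : (Fin n → ℤ) ⧸ LinearMap.range (Matrix.of N).vecMulLinear) : Fin n → ℝ := fun i =>
    Int.fract (coeff q.out i)
  have ht : Function.Injective t := fun q q' hqq' => by
    choose w hw using fun i => Int.fract_eq_fract.1 (congrFun hqq' i)
    rw [← Submodule.Quotient.mk_out q, ← Submodule.Quotient.mk_out q', Submodule.Quotient.eq]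
    refine ⟨w, funext fun j => Int.cast_injective (α := ℝ) ?_⟩
    have hsub : Matrix.vecMul (coeff q.out - coeff q'.out) M j =
        Matrix.vecMul (fun i => (w i : ℝ)) M j :=
      congrArg (fun c => Matrix.vecMul c M j) (funext hw)
    rw [Matrix.sub_vecMul, hcoeff, hcoeff] at hsub
    simpa [hMN, Matrix.vecMul, dotProduct] using hsub.symm
  have : Finite ((Fin n → ℤ) ⧸ LinearMap.range (Matrix.of N).vecMulLinear) :=
    Nat.finite_of_card_ne_zero fun h => hdet <| by simpa [hdetM, h] using hcard.symm
  have := Fintype.ofFinite ((Fin n → ℤ) ⧸ LinearMap.range (Matrix.of N).vecMulLinear)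
  refine ⟨univ.image t, ?_, Finset.forall_mem_image.2 fun q _ => ⟨fun i =>
    ⟨Int.fract_nonneg _, Int.fract_lt_one _⟩, ?_⟩⟩
  · rw [card_image_of_injective _ ht, card_univ, ← Nat.card_eq_fintype_card, hcard, hdetM,
      Nat.cast_natAbs, Int.cast_abs]
  · have hfract : t q = coeff q.out - fun i => (⌊coeff q.out i⌋ : ℝ) := rfl
    rw [hfract, Matrix.sub_vecMul, hcoeff]
    exact sub_mem ⟨_, rfl⟩ (vecMul_mem_integerLattice hM _)

end IntegerLattice

section MixedVolume

lemma sum_neg_one_pow_mul_eq_zero {ι : Type*} [Fintype ι] [DecidableEq ι] {φ : Finset ι → ℝ}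
    {i : ι} (h : ∀ I, i ∉ I → φ (insert i I) = φ I) :
    ∑ I, (-1) ^ (Fintype.card ι - #I) * φ I = 0 := by
  rw [← Finset.powerset_univ, ← insert_erase (mem_univ i),
    sum_powerset_insert (notMem_erase i univ), ← sum_add_distrib]
  refine sum_eq_zero fun I hI => ?_
  have hi : i ∉ I := fun hi => notMem_erase i univ (mem_powerset.1 hI hi)
  have hcard : Fintype.card ι - #I = Fintype.card ι - (#I + 1) + 1 := by
    have := card_lt_univ_of_notMem hi
    omega
  rw [h I hi, card_insert_of_notMem hi, hcard, pow_succ]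
  ring

variable {n : ℕ} {X : Type*} {pt : Fin n → X → Fin n → ℝ} {ω : Fin n → X → ℝ} {f g : Fin n → X}
  {I : Finset (Fin n)} {p y : EuclideanSpace ℝ (Fin n)}

/-- The matrix whose rows are the edge vectors from `pt i (f i)` to `pt i (g i)`. -/
def edgeMatrix (pt : Fin n → X → Fin n → ℝ) (f g : Fin n → X) : Matrix (Fin n) (Fin n) ℝ :=
  Matrix.of fun i => pt i (g i) - pt i (f i)

lemma vecMul_edgeMatrix (t : Fin n → ℝ) :
    Matrix.vecMul t (edgeMatrix pt f g) = ∑ i, t i • (pt i (g i) - pt i (f i)) :=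
  Matrix.vecMul_eq_sum _ _

lemma hullSum_pair_eq (pt : Fin n → X → Fin n → ℝ) (f g : Fin n → X) :
    hullSum pt (fun i => {f i, g i}) univ =
      (fun m => ∑ i, pt i (f i) + m) ''
        ((edgeMatrix pt f g).vecMulLinear '' Set.Icc (0 : Fin n → ℝ) 1) := by
  ext m
  simp only [hullSum, Set.mem_finsetSum, Set.image_pair, convexHull_pair, segment_eq_image',
    Matrix.vecMulLinear_apply, vecMul_edgeMatrix]
  constructor
  · rintro ⟨q, hq, rfl⟩
    choose t ht hqt using fun i => hq (mem_univ i)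
    exact ⟨_, ⟨t, ⟨fun i => (ht i).1, fun i => (ht i).2⟩, rfl⟩, by
      simp only [vecMul_edgeMatrix, ← sum_add_distrib, Matrix.vecMulLinear_apply]
      exact sum_congr rfl fun i _ => hqt i⟩
  · rintro ⟨_, ⟨t, ht, rfl⟩, rfl⟩
    exact ⟨_, fun {i} _ => ⟨t i, ⟨ht.1 i, ht.2 i⟩, rfl⟩, by
      simp only [vecMul_edgeMatrix, ← sum_add_distrib, Matrix.vecMulLinear_apply]⟩

lemma volume_hullSum_pair (pt : Fin n → X → Fin n → ℝ) (f g : Fin n → X) :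
    (volume (hullSum pt (fun i => {f i, g i}) univ)).toReal = |(edgeMatrix pt f g).det| := by
  rw [hullSum_pair_eq, Set.image_add_left, measure_preimage_add, Measure.addHaar_image_linearMap,
    det_vecMulLinear, Real.volume_Icc_pi]
  simp

/-- Some colour has a unique active label at `y`, and adding this colour translates the cell. -/
lemma sum_neg_one_pow_mul_volume_dualCell_eq_zero [Finite X] [Nonempty X]
    (hy : y ∉ crossings (dualArrangement pt ω) univ Set.univ) :
    ∑ I, (-1) ^ (n - #I) * (volume (dualCell pt ω I y)).toReal = 0 := by
  obtain ⟨i, hi⟩ : ∃ i, ∀ x x', IsActive (dualArrangement pt ω) i x y →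
      IsActive (dualArrangement pt ω) i x' y → x = x' := by
    by_contra! hc
    refine hy ⟨trivial, fun i _ => ?_⟩
    obtain ⟨x, x', hx, hx', hne⟩ := hc i
    exact ⟨x, x', hne, hx, hx'⟩
  obtain ⟨x, hx⟩ := exists_isActive (dualArrangement pt ω) i y
  have hsingle : {x | IsActive (dualArrangement pt ω) i x y} = {x} :=
    Set.eq_singleton_iff_unique_mem.2 ⟨hx, fun x' hx' => hi x' x hx' hx⟩
  have htoggle : ∀ I, i ∉ I → dualCell pt ω (insert i I) y = (pt i x + ·) '' dualCell pt ω I y :=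
    fun I hI => by
      rw [dualCell, hullSum, sum_insert hI, hsingle, Set.image_singleton, convexHull_singleton,
        Set.singleton_add]
      rfl
  simpa using sum_neg_one_pow_mul_eq_zero
    (φ := fun I => (volume (dualCell pt ω I y)).toReal) (i := i) fun I hI => by
      rw [htoggle I hI, Set.image_add_left, measure_preimage_add]

lemma IsGenericArrangement.setOf_isActive_eq {ι E : Type*} [Fintype ι] [NormedAddCommGroup E]
    [InnerProductSpace ℝ E] [FiniteDimensional ℝ E] {A : ι → X → E →ᵃ[ℝ] ℝ}
    (h : IsGenericArrangement A) {f g : ι → X} {p : E} (hfg : IsActivePair A univ f g p) (i : ι) :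
    {x | IsActive A i x p} = {f i, g i} := by
  refine Set.Subset.antisymm (fun x hx => ?_) ?_
  · exact (h.isTransverse p).eq_or_eq_of_isActive hfg (by simpa using h.card_eq) (mem_univ i) hx
  · rintro x (rfl | rfl)
    exacts [(hfg i (mem_univ i)).2.1, (hfg i (mem_univ i)).2.2]

lemma slopeDiff_dualArrangement (i : Fin n) (u : EuclideanSpace ℝ (Fin n)) :
    slopeDiff (dualArrangement pt ω) f g i u =
      pairing n (pt i (f i)) u - pairing n (pt i (g i)) u := by
  simp [slopeDiff]

variable (h : IsGenericArrangement (dualArrangement pt ω))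
include h

lemma dualCell_eq_hullSum_pair (hfg : IsActivePair (dualArrangement pt ω) univ f g p) :
    dualCell pt ω I p = hullSum pt (fun i => {f i, g i}) I := by
  rw [dualCell, funext (h.setOf_isActive_eq hfg)]

lemma volume_dualCell_eq_zero (hfg : IsActivePair (dualArrangement pt ω) univ f g p)
    (hI : I ≠ univ) : volume (dualCell pt ω I p) = 0 := by
  obtain ⟨j, hj⟩ : ∃ j, j ∉ I := by simpa [eq_univ_iff_forall] using hI
  obtain ⟨u, -, hu⟩ := (h.isTransverse p).exists_slopeDiff_eq hfg (Pi.single j 1)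
  simp only [slopeDiff_dualArrangement] at hu
  have hu0 : u ≠ 0 := fun hu0 => by simpa [hu0] using hu j (mem_univ j)
  rw [dualCell_eq_hullSum_pair h hfg]
  refine addHaar_hullSum_eq_zero volume (pairing_flip_ne_zero hu0) fun i hi => ?_
  have htie := hu i (mem_univ i)
  rw [Pi.single_eq_of_ne (ne_of_mem_of_not_mem hi hj), sub_eq_zero] at htie
  simp [htie]

lemma crossings_subset_subdivisionVertices [Nonempty X] :
    crossings (dualArrangement pt ω) univ Set.univ ⊆
      subdivisionVertices (dualArrangement pt ω) := fun p hp u hu => by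
  obtain ⟨f, g, hfg⟩ := exists_isActivePair hp
  refine (h.isTransverse p).eq_zero_of_slopeDiff_eq_zero hfg (by simp) Submodule.mem_top
    fun i hi => ?_
  rw [slopeDiff, LinearMap.sub_apply, hu i _ _ (hfg i hi).2.1 (hfg i hi).2.2, sub_self]

theorem sum_neg_one_pow_mul_volume_hullSum_eq [Finite X] [Nonempty X]
    {S : Finset (EuclideanSpace ℝ (Fin n))}
    (hS : (S : Set (EuclideanSpace ℝ (Fin n))) = crossings (dualArrangement pt ω) univ Set.univ)
    {f g : EuclideanSpace ℝ (Fin n) → Fin n → X}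
    (hfg : ∀ p ∈ S, IsActivePair (dualArrangement pt ω) univ (f p) (g p) p) :
    ∑ I, (-1) ^ (n - #I) * (volume (hullSum pt (fun _ => Set.univ) I)).toReal =
      ∑ p ∈ S, |(edgeMatrix pt (f p) (g p)).det| := by
  have hfinite (I y) : volume (dualCell pt ω I y) ≠ ⊤ :=
    (isCompact_hullSum _ _ I).measure_lt_top.ne
  simp only [volume_hullSum_univ pt ω, ENNReal.toReal_sum fun y _ => hfinite _ y, mul_sum]
  rw [sum_comm]
  have hsub : S ⊆ (finite_subdivisionVertices (dualArrangement pt ω)).toFinset := by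
    rw [Set.Finite.subset_toFinset, hS]
    exact crossings_subset_subdivisionVertices h
  rw [← sum_subset hsub fun y _ hy => sum_neg_one_pow_mul_volume_dualCell_eq_zero (hS ▸ hy)]
  refine sum_congr rfl fun p hp => ?_
  rw [sum_eq_single univ (fun I _ hI => by simp [volume_dualCell_eq_zero h (hfg p hp) hI])
    (fun h => absurd (mem_univ _) h), dualCell_eq_hullSum_pair h (hfg p hp), volume_hullSum_pair]
  simp

end MixedVolume

section Weights

variable {ι X : Type*}

section Gap

variable {E : Type*} [NormedAddCommGroup E] [InnerProductSpace ℝ E] {A : ι → X → E →ᵃ[ℝ] ℝ}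
  {θ : ι → X → ℝ} {y z : E}

/-- The points at which all labels of nonzero weight are active. -/
def weightCell (A : ι → X → E →ᵃ[ℝ] ℝ) (θ : ι → X → ℝ) : Set E :=
  cell A (fun i => Function.support (θ i)) Set.univ

lemma mem_weightCell : y ∈ weightCell A θ ↔ ∀ i x, θ i x ≠ 0 → IsActive A i x y := by
  simp [weightCell, cell]

variable [Fintype ι] [Fintype X]

lemma IsTransverse.eq_zero_of_sum_mul_linear_eq_zero (hT : IsTransverse A ⊤ univ y)
    (hy : y ∈ weightCell A θ) (hrow : ∀ i, ∑ x, θ i x = 0)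
    (hsum : ∀ u, ∑ i, ∑ x, θ i x * (A i x).linear u = 0) : θ = 0 := by
  obtain ⟨u, -, s, hs⟩ := hT θ
  have hslope : ∀ i x, θ i x * (A i x).linear u = θ i x ^ 2 + θ i x * s i := fun i x => by
    rcases eq_or_ne (θ i x) 0 with h0 | h0
    · simp [h0]
    · rw [hs i (mem_univ i) x (mem_weightCell.1 hy i x h0)]
      ring
  have hsq : ∑ i, ∑ x, θ i x ^ 2 = 0 := by
    simpa only [hslope, sum_add_distrib, ← sum_mul, hrow, zero_mul, add_zero] using hsum u
  funext i x
  have hi := (sum_eq_zero_iff_of_nonneg fun i _ => sum_nonneg fun x _ => sq_nonneg (θ i x)).1 hsq i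
    (mem_univ i)
  exact pow_eq_zero_iff two_ne_zero |>.1 <|
    (sum_eq_zero_iff_of_nonneg fun x _ => sq_nonneg (θ i x)).1 hi x (mem_univ x)

variable [Nonempty X]

/-- By how much the weighted values of the affine functions fail to reach the maximal ones. -/
noncomputable def gap (A : ι → X → E →ᵃ[ℝ] ℝ) (θ : ι → X → ℝ) (z : E) : ℝ :=
  ∑ i, ∑ x, θ i x * (maxValue A i z - A i x z)

lemma gap_nonneg (hθ : ∀ i, θ i ∈ stdSimplex ℝ X) (z : E) : 0 ≤ gap A θ z :=
  sum_nonneg fun i _ => sum_nonneg fun x _ =>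
    mul_nonneg ((hθ i).1 x) (sub_nonneg.2 (le_maxValue A i x z))

lemma gap_eq_zero_iff (hθ : ∀ i, θ i ∈ stdSimplex ℝ X) : gap A θ z = 0 ↔ z ∈ weightCell A θ := by
  have hterm (i x) : 0 ≤ θ i x * (maxValue A i z - A i x z) :=
    mul_nonneg ((hθ i).1 x) (sub_nonneg.2 (le_maxValue A i x z))
  have hactive (i x) : maxValue A i z - A i x z = 0 ↔ IsActive A i x z :=
    ⟨fun h w => (le_maxValue A i w z).trans (sub_eq_zero.1 h).le,
      fun h => sub_eq_zero.2 h.maxValue_eq⟩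
  rw [gap, sum_eq_zero_iff_of_nonneg fun i _ => sum_nonneg fun x _ => hterm i x, mem_weightCell]
  simp only [sum_eq_zero_iff_of_nonneg fun x _ => hterm _ x, mul_eq_zero, hactive, mem_univ,
    true_imp_iff, or_iff_not_imp_left]

end Gap

variable [Fintype ι] [Fintype X]

/-- The Minkowski sum of the weighted means `∑ x, θ i x • pt i x`, where `θ i` is a vector of
convex weights on the labels of colour `i`. -/
def weightedSum {V : Type*} [AddCommGroup V] [Module ℝ V] (pt : ι → X → V) (θ : ι → X → ℝ) : V :=
  ∑ i, ∑ x, θ i x • pt i x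

variable {n : ℕ} {pt : ι → X → Fin n → ℝ} {ω : ι → X → ℝ} {θ θ' : ι → X → ℝ}
  {y z : EuclideanSpace ℝ (Fin n)}

lemma pairing_weightedSum (θ : ι → X → ℝ) (z : EuclideanSpace ℝ (Fin n)) :
    pairing n (weightedSum pt θ) z = ∑ i, ∑ x, θ i x * pairing n (pt i x) z := by
  simp [weightedSum, map_sum, LinearMap.sum_apply]

variable [Nonempty X]

lemma gap_dualArrangement (hθ : ∀ i, θ i ∈ stdSimplex ℝ X) (z : EuclideanSpace ℝ (Fin n)) :
    gap (dualArrangement pt ω) θ z = ∑ i, maxValue (dualArrangement pt ω) i z -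
      pairing n (weightedSum pt θ) z - ∑ i, ∑ x, θ i x * ω i x := by
  simp only [gap, pairing_weightedSum, ← sum_sub_distrib]
  refine sum_congr rfl fun i _ => ?_
  simp only [affineArrangement_apply, mul_sub, mul_add, sum_sub_distrib, sum_add_distrib, ← sum_mul,
    (hθ i).2, one_mul]
  ring

/-- The gaps of `θ` and `θ'` differ by a constant, which vanishes because each of the two gaps
attains the value `0`; hence the two weight cells coincide. -/
lemma mem_weightCell_of_weightedSum_eq (hθ : ∀ i, θ i ∈ stdSimplex ℝ X)
    (hθ' : ∀ i, θ' i ∈ stdSimplex ℝ X) (hy : y ∈ weightCell (dualArrangement pt ω) θ)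
    (hz : z ∈ weightCell (dualArrangement pt ω) θ')
    (heq : weightedSum pt θ = weightedSum pt θ') : y ∈ weightCell (dualArrangement pt ω) θ' := by
  rw [← gap_eq_zero_iff hθ] at hy
  rw [← gap_eq_zero_iff hθ'] at hz ⊢
  have hy' := gap_nonneg (A := dualArrangement pt ω) hθ' y
  have hz' := gap_nonneg (A := dualArrangement pt ω) hθ z
  rw [gap_dualArrangement hθ, heq] at hy hz'
  rw [gap_dualArrangement hθ'] at hz hy' ⊢
  linarith

lemma eq_of_weightedSum_eq (hT : ∀ y, IsTransverse (dualArrangement pt ω) ⊤ univ y)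
    (hθ : ∀ i, θ i ∈ stdSimplex ℝ X) (hθ' : ∀ i, θ' i ∈ stdSimplex ℝ X)
    (hne : (weightCell (dualArrangement pt ω) θ).Nonempty)
    (hne' : (weightCell (dualArrangement pt ω) θ').Nonempty)
    (heq : weightedSum pt θ = weightedSum pt θ') : θ = θ' := by
  obtain ⟨y, hy⟩ := hne
  obtain ⟨z, hz⟩ := hne'
  have hy' := mem_weightCell_of_weightedSum_eq hθ hθ' hy hz heq
  refine sub_eq_zero.1 ((hT y).eq_zero_of_sum_mul_linear_eq_zero (mem_weightCell.2 ?_) ?_ ?_)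
  · intro i x hx
    by_cases h0 : θ i x = 0
    · exact mem_weightCell.1 hy' i x fun h0' => hx (by simp [h0, h0'])
    · exact mem_weightCell.1 hy i x h0
  · intro i
    simp [sum_sub_distrib, (hθ i).2, (hθ' i).2]
  · intro u
    simp [sub_mul, sum_sub_distrib, ← pairing_weightedSum, heq]

lemma eq_zero_of_forall_add_smul_mem {E : Type*} [NormedAddCommGroup E] [NormedSpace ℝ E]
    {s : Set E} {y u : E} (hs : Bornology.IsBounded s) (h : ∀ t : ℝ, 0 ≤ t → y + t • u ∈ s) :
    u = 0 := by
  by_contra hu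
  have hpos := norm_pos_iff.2 hu
  have hdiam (t : ℝ) (ht : 0 ≤ t) : t * ‖u‖ ≤ Metric.diam s := by
    simpa [norm_smul, abs_of_nonneg ht] using
      Metric.dist_le_diam_of_mem hs (h t ht) (h 0 le_rfl)
  have := hdiam ((Metric.diam s + 1) / ‖u‖)
    (div_nonneg (add_nonneg Metric.diam_nonneg zero_le_one) hpos.le)
  rw [div_mul_cancel₀ _ hpos.ne'] at this
  linarith

/-- A functional `u` with maximum at `weightedSum pt θ` is maximal on all labels of nonzero weight,
so the cell is invariant under translation by the positive multiples of `u`. -/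
lemma weightedSum_mem_interior_hullSum (hθ : ∀ i, θ i ∈ stdSimplex ℝ X)
    (hint : (interior (hullSum pt (fun _ => Set.univ) univ)).Nonempty)
    (hne : (weightCell (dualArrangement pt ω) θ).Nonempty)
    (hb : Bornology.IsBounded (weightCell (dualArrangement pt ω) θ)) :
    weightedSum pt θ ∈ interior (hullSum pt (fun _ => Set.univ) univ) := by
  by_contra hm
  obtain ⟨φ, hφ0, hφ⟩ :=
    geometric_hahn_banach_of_nonempty_interior_point (convex_hullSum _ _ _) hm hint
  obtain ⟨u, hu⟩ := exists_eq_pairing_flip (φ : (Fin n → ℝ) →ₗ[ℝ] ℝ)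
  have hφu (m) : φ m = pairing n m u := LinearMap.congr_fun hu m
  choose x hx using fun i => exists_isActive (dualArrangement pt 0) i u
  have hgap : gap (dualArrangement pt 0) θ u = 0 := by
    refine le_antisymm ?_ (gap_nonneg hθ u)
    have hle := hφ _ (sum_mem_hullSum fun i => Set.mem_univ (x i))
    simp only [hφu, map_sum, LinearMap.sum_apply] at hle
    rw [gap_dualArrangement hθ, sum_congr rfl fun i _ => (hx i).maxValue_eq]
    simpa [affineArrangement_apply] using hle
  rw [gap_eq_zero_iff hθ, mem_weightCell] at hgap
  obtain ⟨y, hy⟩ := hne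
  have hu0 : u = 0 := eq_zero_of_forall_add_smul_mem hb fun t ht => mem_weightCell.2 fun i x hx =>
    (mem_weightCell.1 hy i x hx).add_smul
      (fun w => by simpa [affineArrangement_apply] using hgap i x hx w) ht
  exact hφ0 (ContinuousLinearMap.ext fun m => by simp [hφu, hu0])

end Weights

section EdgeWeights

variable {ι X : Type*} [DecidableEq X]

/-- The weights of the point dividing each edge from `v i` to `g i` in the ratio `t i : 1 - t i`. -/
noncomputable def edgeWeights (v g : ι → X) (t : ι → ℝ) (i : ι) : X → ℝ :=
  (1 - t i) • Pi.single (v i) 1 + t i • Pi.single (g i) 1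

/-- The fractional parts of `edgeWeights f g t`. They forget `f i` for the colours with `t i = 0`,
which is what the pairs `(p, t)` of a crossing and a lattice point of its box are grouped by. -/
noncomputable def edgeKey (f g : ι → X) (t : ι → ℝ) (i : ι) (x : X) : ℝ :=
  Int.fract (edgeWeights f g t i x)

variable {f g v v' : ι → X} {t : ι → ℝ} {i : ι} {x : X}

lemma edgeWeights_apply : edgeWeights v g t i x =
    (1 - t i) * (if x = v i then 1 else 0) + t i * (if x = g i then 1 else 0) := by
  simp [edgeWeights, Pi.single_apply]

lemma edgeWeights_mem_stdSimplex [Fintype X] (ht : t i ∈ Set.Ico 0 1) :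
    edgeWeights v g t i ∈ stdSimplex ℝ X :=
  convex_stdSimplex ℝ X (single_mem_stdSimplex ℝ _) (single_mem_stdSimplex ℝ _)
    (sub_nonneg.2 ht.2.le) ht.1 (sub_add_cancel 1 (t i))

lemma edgeWeights_ne_zero_iff (ht : t i ∈ Set.Ico 0 1) :
    edgeWeights v g t i x ≠ 0 ↔ x = v i ∨ (x = g i ∧ t i ≠ 0) := by
  have h1 : 1 - t i ≠ 0 := (sub_pos.2 ht.2).ne'
  rw [edgeWeights_apply]
  by_cases hv : x = v i
  · by_cases hg : x = g i
    · rw [if_pos hv, if_pos hg]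
      simp [hv]
    · simp [hv, hv ▸ hg, h1]
  · simp [hv]

lemma edgeKey_congr (hv : t i ≠ 0 → v i = f i) : edgeKey v g t i x = edgeKey f g t i x := by
  simp only [edgeKey, edgeWeights_apply]
  by_cases hi : t i = 0
  · split_ifs <;> simp [hi]
  · rw [hv hi]

lemma edgeKey_right (hfg : f i ≠ g i) (ht : t i ∈ Set.Ico 0 1) : edgeKey f g t i (g i) = t i := by
  rw [edgeKey, edgeWeights_apply, if_neg hfg.symm, if_pos rfl, mul_zero, zero_add, mul_one]
  exact Int.fract_eq_self.2 ht

lemma edgeKey_ne_zero_iff (hfg : f i ≠ g i) (ht : t i ∈ Set.Ico 0 1) :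
    edgeKey f g t i x ≠ 0 ↔ t i ≠ 0 ∧ (x = f i ∨ x = g i) := by
  by_cases hi : t i = 0
  · rw [edgeKey, edgeWeights_apply]
    split_ifs <;> simp [hi]
  · have hpos : 0 < t i := ht.1.lt_of_ne' hi
    have hmem : edgeWeights f g t i x ∈ Set.Ico 0 1 := by
      have hlt := ht.2
      rw [edgeWeights_apply]
      split_ifs with hf hg
      · exact absurd (hf.symm.trans hg) hfg
      all_goals constructor <;> linarith
    rw [edgeKey, Int.fract_eq_self.2 hmem, edgeWeights_ne_zero_iff ht]
    simp [hi]

lemma eq_of_edgeWeights_eq (ht : ∀ i, t i ∈ Set.Ico 0 1) (hv : ∀ i, t i ≠ 0 → v i = v' i)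
    (heq : edgeWeights v g t = edgeWeights v' g t) : v = v' := by
  funext i
  by_cases hi : t i = 0
  · simpa [heq, hi, edgeWeights_ne_zero_iff (ht i)] using
      (edgeWeights_ne_zero_iff (v := v) (g := g) (x := v i) (ht i)).2 (Or.inl rfl)
  · exact hv i hi

lemma weightedSum_edgeWeights {V : Type*} [AddCommGroup V] [Module ℝ V] [Fintype ι] [Fintype X]
    (pt : ι → X → V) (hv : ∀ i, t i ≠ 0 → v i = f i) :
    weightedSum pt (edgeWeights v g t) =
      ∑ i, pt i (v i) + ∑ i, t i • (pt i (g i) - pt i (f i)) := by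
  rw [weightedSum, ← sum_add_distrib]
  refine sum_congr rfl fun i _ => ?_
  have hsum : ∑ x, edgeWeights v g t i x • pt i x = (1 - t i) • pt i (v i) + t i • pt i (g i) := by
    simp [edgeWeights_apply, add_smul, sum_add_distrib, ite_smul]
  rw [hsum]
  by_cases hi : t i = 0
  · simp [hi]
  · rw [hv i hi]
    module

variable {E : Type*} [NormedAddCommGroup E] [InnerProductSpace ℝ E] {A : ι → X → E →ᵃ[ℝ] ℝ}
  [Fintype ι]

lemma weightCell_edgeWeights [DecidableEq ι] (ht : ∀ i, t i ∈ Set.Ico 0 1)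
    (hv : ∀ i, t i ≠ 0 → v i = f i) :
    weightCell A (edgeWeights v g t) =
      region A ({i | t i ≠ 0} : Finset ι)ᶜ (tieLocus A {i | t i ≠ 0} f g) v := by
  ext y
  simp only [mem_weightCell, edgeWeights_ne_zero_iff (ht _), region, tieLocus, Set.mem_ofPred_eq,
    mem_filter_univ, mem_compl, not_not]
  refine ⟨fun hy => ⟨fun i hi => ⟨?_, hy i _ (Or.inr ⟨rfl, hi⟩)⟩,
    fun i _ => hy i _ (Or.inl rfl)⟩, ?_⟩
  · exact hv i hi ▸ hy i _ (Or.inl rfl)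
  · rintro ⟨hK, hKc⟩ i x (rfl | ⟨rfl, hi⟩)
    · by_cases hi : t i = 0
      · exact hKc i hi
      · exact hv i hi ▸ (hK i hi).1
    · exact (hK i hi).2

end EdgeWeights

section Fibers

variable {ι X E : Type*} [NormedAddCommGroup E] [InnerProductSpace ℝ E]
  [Fintype ι] {A : ι → X → E →ᵃ[ℝ] ℝ} {f g : E → ι → X}
  {Q : Finset (Σ _ : E, ι → ℝ)}

/-- All crossings with the same key as `q` lie on the tie locus of the colours `i` with
`q.2 i ≠ 0`. -/
lemma card_edgeKey_fiber_le [DecidableEq ι] [DecidableEq X] [DecidableEq (ι → X → ℝ)]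
    (hfg : ∀ q ∈ Q, IsActivePair A univ (f q.1) (g q.1) q.1)
    (hQ : ∀ q ∈ Q, ∀ i, q.2 i ∈ Set.Ico (0 : ℝ) 1) {q : Σ _ : E, ι → ℝ} (hq : q ∈ Q)
    {S : Finset E}
    (hS : (S : Set E) =
      crossings A ({i | q.2 i ≠ 0} : Finset ι)ᶜ (tieLocus A {i | q.2 i ≠ 0} (f q.1) (g q.1))) :
    #{r ∈ Q | edgeKey (f r.1) (g r.1) r.2 = edgeKey (f q.1) (g q.1) q.2} ≤ #S := by
  refine card_le_card_of_injOn Sigma.fst (fun r hr => ?_) fun r hr r' hr' hrr' => ?_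
  · obtain ⟨hrQ, hkey⟩ := mem_filter.1 hr
    have hactive : ∀ i, q.2 i ≠ 0 → ∀ x, x = f q.1 i ∨ x = g q.1 i → IsActive A i x r.1 := by
      intro i hi x hx
      have hne := (edgeKey_ne_zero_iff (hfg q hq i (mem_univ i)).1 (hQ q hq i)).2 ⟨hi, hx⟩
      rw [← hkey, edgeKey_ne_zero_iff (hfg r hrQ i (mem_univ i)).1 (hQ r hrQ i)] at hne
      rcases hne.2 with rfl | rfl
      exacts [(hfg r hrQ i (mem_univ i)).2.1, (hfg r hrQ i (mem_univ i)).2.2]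
    rw [hS]
    refine ⟨fun i hi => ?_, fun i _ => ⟨_, _, hfg r hrQ i (mem_univ i)⟩⟩
    rw [mem_filter_univ] at hi
    exact ⟨hactive i hi _ (Or.inl rfl), hactive i hi _ (Or.inr rfl)⟩
  · obtain ⟨hrQ, hkey⟩ := mem_filter.1 hr
    obtain ⟨hrQ', hkey'⟩ := mem_filter.1 hr'
    obtain ⟨p, t⟩ := r
    obtain ⟨p', t'⟩ := r'
    obtain rfl : p = p' := hrr'
    have heq := hkey.trans hkey'.symm
    suffices t = t' by rw [this]
    funext i
    calc t i = edgeKey (f p) (g p) t i (g p i) :=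
          (edgeKey_right (hfg _ hrQ i (mem_univ i)).1 (hQ _ hrQ i)).symm
      _ = edgeKey (f p) (g p) t' i (g p i) := congrFun₂ heq i (g p i)
      _ = t' i := edgeKey_right (hfg _ hrQ' i (mem_univ i)).1 (hQ _ hrQ' i)

lemma card_le_card_add_one_of_fiber {α β γ : Type*} [DecidableEq γ] {Q : Finset α} {T : Finset β}
    {key : α → γ} {key' : β → γ} (c : γ) (h : ∀ q ∈ Q, #{r ∈ Q | key r = key q} ≤
      #{θ ∈ T | key' θ = key q} + if key q = c then 1 else 0) : #Q ≤ #T + 1 :=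
  calc #Q = ∑ κ ∈ Q.image key, #{r ∈ Q | key r = κ} := card_eq_sum_card_image key Q
    _ ≤ ∑ κ ∈ Q.image key, (#{θ ∈ T | key' θ = κ} + if κ = c then 1 else 0) :=
        sum_le_sum (Finset.forall_mem_image.2 h)
    _ = #{θ ∈ T | key' θ ∈ Q.image key} + if c ∈ Q.image key then 1 else 0 := by
        rw [sum_add_distrib, sum_card_fiberwise_eq_card_filter, sum_ite_eq']
    _ ≤ #T + 1 := by
        gcongr
        · exact filter_subset _ _
        · split_ifs <;> simp

end Fibers

section LatticeWeights

variable {n : ℕ}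

lemma finite_intLat {s : Set (Fin n → ℝ)} (hs : Bornology.IsBounded s) : (intLat s).Finite := by
  obtain ⟨R, hR⟩ := hs.subset_closedBall 0
  refine ((Set.finite_Icc (fun _ : Fin n => -⌈R⌉) fun _ => ⌈R⌉).image
    fun (z : Fin n → ℤ) i => (z i : ℝ)).subset ?_
  rintro x ⟨hx, hlat⟩
  choose z hz using hlat
  have hz' (i) : |(z i : ℝ)| ≤ ⌈R⌉ := by
    rw [← hz i]
    exact (norm_le_pi_norm x i).trans <|
      (mem_closedBall_zero_iff.1 (hR (interior_subset hx))).trans (Int.le_ceil R)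
  refine ⟨z, ⟨fun i => ?_, fun i => ?_⟩, funext fun i => (hz i).symm⟩
  · exact_mod_cast (abs_le.1 (hz' i)).1
  · exact_mod_cast (abs_le.1 (hz' i)).2

variable {X : Type*} {pt : Fin n → X → Fin n → ℝ} {ω : Fin n → X → ℝ}

/-- The convex weights on the labels whose weighted sum is a lattice point and whose cell is
nonempty and bounded, as it is for the interior points of the Minkowski sum. -/
def latticeWeights [Fintype X] (pt : Fin n → X → Fin n → ℝ) (ω : Fin n → X → ℝ) :
    Set (Fin n → X → ℝ) :=
  {θ | (∀ i, θ i ∈ stdSimplex ℝ X) ∧ (weightCell (dualArrangement pt ω) θ).Nonempty ∧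
    Bornology.IsBounded (weightCell (dualArrangement pt ω) θ) ∧
    weightedSum pt θ ∈ integerLattice n}

lemma card_boundedRegionLabels_le [Fintype X] [DecidableEq X]
    {T : Finset (Fin n → X → ℝ)}
    (hT : (T : Set (Fin n → X → ℝ)) = latticeWeights pt ω)
    (hpt : ∀ i x, pt i x ∈ integerLattice n) {f g : Fin n → X} {t : Fin n → ℝ}
    (ht : ∀ i, t i ∈ Set.Ico (0 : ℝ) 1)
    (hlat : Matrix.vecMul t (edgeMatrix pt f g) ∈ integerLattice n) :
    #(boundedRegionLabels (dualArrangement pt ω) {i | t i ≠ 0} f g) ≤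
      #{θ ∈ T | (fun i x => Int.fract (θ i x)) = edgeKey f g t} := by
  have hagree {v} (hv : v ∈ boundedRegionLabels (dualArrangement pt ω) {i | t i ≠ 0} f g) (i)
      (hi : t i ≠ 0) : v i = f i :=
    (mem_boundedRegionLabels.1 hv).1 i ((mem_filter_univ i).2 hi)
  refine card_le_card_of_injOn (fun v => edgeWeights v g t) (fun v hv => ?_)
    fun v hv v' hv' heq => eq_of_edgeWeights_eq ht
      (fun i hi => (hagree hv i hi).trans (hagree hv' i hi).symm) heq
  obtain ⟨-, hne, hb⟩ := mem_boundedRegionLabels.1 hv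
  rw [← weightCell_edgeWeights ht (hagree hv)] at hne hb
  refine mem_filter.2 ⟨?_, funext₂ fun i x => edgeKey_congr (hagree hv i)⟩
  rw [← Finset.mem_coe, hT]
  refine ⟨fun i => edgeWeights_mem_stdSimplex (ht i), hne, hb, ?_⟩
  rw [weightedSum_edgeWeights pt (hagree hv), ← vecMul_edgeMatrix]
  exact add_mem (sum_mem fun i _ => hpt i (v i)) hlat

lemma finite_intLat_hullSum [Finite X] (pt : Fin n → X → Fin n → ℝ) :
    (intLat (hullSum pt (fun _ => Set.univ) univ)).Finite :=
  finite_intLat (isCompact_hullSum pt _ univ).isBounded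

variable [Nonempty X]

lemma injOn_weightedSum [Fintype X]
    (hT : ∀ y, IsTransverse (dualArrangement pt ω) ⊤ univ y) :
    Set.InjOn (weightedSum pt) (latticeWeights pt ω) :=
  fun _ hθ _ hθ' => eq_of_weightedSum_eq hT hθ.1 hθ'.1 hθ.2.1 hθ'.2.1

lemma mapsTo_weightedSum [Fintype X]
    (hint : (interior (hullSum pt (fun _ => Set.univ) univ)).Nonempty) :
    Set.MapsTo (weightedSum pt) (latticeWeights pt ω)
      (intLat (hullSum pt (fun _ => Set.univ) univ)) :=
  fun _ ⟨hθ, hne, hb, hlat⟩ =>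
    ⟨weightedSum_mem_interior_hullSum hθ hint hne hb, isLatticePt_iff.2 hlat⟩

lemma finite_latticeWeights [Fintype X]
    (hT : ∀ y, IsTransverse (dualArrangement pt ω) ⊤ univ y)
    (hint : (interior (hullSum pt (fun _ => Set.univ) univ)).Nonempty) :
    (latticeWeights pt ω).Finite :=
  .of_injOn (mapsTo_weightedSum hint) (injOn_weightedSum hT) (finite_intLat_hullSum pt)

variable {f g : EuclideanSpace ℝ (Fin n) → Fin n → X} {S : Finset (EuclideanSpace ℝ (Fin n))}
  {Λ : EuclideanSpace ℝ (Fin n) → Finset (Fin n → ℝ)} {T : Finset (Fin n → X → ℝ)}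

/-- The pairs `(p, t)` and the weights are compared separately on each fibre of the fractional
parts: those with fractional parts `0` account for the `1`. -/
theorem sum_card_le_card_latticeWeights [Fintype X]
    (h : IsGenericArrangement (dualArrangement pt ω))
    (hT : (T : Set (Fin n → X → ℝ)) = latticeWeights pt ω)
    (hpt : ∀ i x, pt i x ∈ integerLattice n)
    (hS : (S : Set (EuclideanSpace ℝ (Fin n))) = crossings (dualArrangement pt ω) univ Set.univ)
    (hfg : ∀ p ∈ S, IsActivePair (dualArrangement pt ω) univ (f p) (g p) p)
    (hΛ : ∀ p ∈ S, ∀ t ∈ Λ p, (∀ i, t i ∈ Set.Ico (0 : ℝ) 1) ∧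
      Matrix.vecMul t (edgeMatrix pt (f p) (g p)) ∈ integerLattice n) :
    ∑ p ∈ S, #(Λ p) ≤ #T + 1 := by
  classical
  rw [← card_sigma]
  have hpair (q) (hq : q ∈ S.sigma Λ) := hfg q.1 (mem_sigma.1 hq).1
  have hbox (q) (hq : q ∈ S.sigma Λ) := hΛ q.1 (mem_sigma.1 hq).1 q.2 (mem_sigma.1 hq).2
  refine card_le_card_add_one_of_fiber (key := fun q => edgeKey (f q.1) (g q.1) q.2)
    (key' := fun θ i x => Int.fract (θ i x)) 0 fun q hq => ?_
  have hne : ∀ k ∈ ({i | q.2 i ≠ 0} : Finset (Fin n)), f q.1 k ≠ g q.1 k :=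
    fun k _ => (hpair q hq k (mem_univ k)).1
  have hfin : (crossings (dualArrangement pt ω) ({i | q.2 i ≠ 0} : Finset (Fin n))ᶜ
      (tieLocus (dualArrangement pt ω) {i | q.2 i ≠ 0} (f q.1) (g q.1))).Finite :=
    S.finite_toSet.subset fun p hp => hS ▸ mem_crossings_univ_of_mem_tieLocus hne hp
  have hfiber :=
    (card_edgeKey_fiber_le hpair (fun q hq => (hbox q hq).1) hq hfin.coe_toFinset).trans
      (h.card_crossings_tieLocus_le hne hfin.coe_toFinset)
  have hregion := card_boundedRegionLabels_le hT hpt (hbox q hq).1 (hbox q hq).2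
  by_cases h0 : edgeKey (f q.1) (g q.1) q.2 = 0
  · rw [if_pos h0]
    exact hfiber.trans (add_le_add hregion (by split_ifs <;> decide))
  · obtain ⟨i, hi⟩ := Function.ne_iff.1 h0
    obtain ⟨x, hx⟩ := Function.ne_iff.1 hi
    have hK := ((edgeKey_ne_zero_iff (hpair q hq i (mem_univ i)).1 ((hbox q hq).1 i)).1 hx).1
    rw [if_neg (Finset.ne_empty_of_mem ((mem_filter_univ i).2 hK))] at hfiber
    rw [if_neg h0]
    exact hfiber.trans (Nat.add_le_add_right hregion 0)

theorem sum_neg_one_pow_mul_volume_hullSum_sub_one_le [Finite X]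
    (hpt : ∀ i x, IsLatticePt (pt i x))
    (hco : ∀ i, ∀ u ≠ 0, ∃ x x', pairing n (pt i x) u ≠ pairing n (pt i x') u)
    (hint : (interior (hullSum pt (fun _ => Set.univ) univ)).Nonempty) :
    ∑ I : Finset (Fin n), (-1) ^ (n - #I) * (volume (hullSum pt (fun _ => Set.univ) I)).toReal - 1 ≤
      (intLat (hullSum pt (fun _ => Set.univ) univ)).ncard := by
  cases nonempty_fintype X
  simp only [isLatticePt_iff] at hpt
  obtain ⟨ω, hω⟩ := exists_isTransverse_affineArrangement fun i x => pairing n (pt i x)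
  have h : IsGenericArrangement (dualArrangement pt ω) := ⟨hω, by simp, fun i _ u _ hu => by
    simpa using hco i u hu⟩
  obtain ⟨S, hS⟩ := h.finite_crossings.exists_finset_coe
  obtain ⟨T, hT⟩ := (finite_latticeWeights hω hint).exists_finset_coe
  have hpair (p) (hp : p ∈ S) :
      ∃ f g, IsActivePair (dualArrangement pt ω) univ f g p :=
    exists_isActivePair (hS.subset hp)
  choose! f g hfg using hpair
  have hedge (p) (i) : edgeMatrix pt (f p) (g p) i ∈ integerLattice n :=
    sub_mem (hpt i _) (hpt i _)
  choose Λ hdet hΛ using fun p => exists_abs_det_le_card (hedge p)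
  rw [sum_neg_one_pow_mul_volume_hullSum_eq h hS hfg, sub_le_iff_le_add]
  calc ∑ p ∈ S, |(edgeMatrix pt (f p) (g p)).det| ≤ ∑ p ∈ S, (#(Λ p) : ℝ) :=
        sum_le_sum fun p _ => hdet p
    _ ≤ #T + 1 := by
        exact_mod_cast sum_card_le_card_latticeWeights h hT hpt hS hfg fun p _ => hΛ p
    _ ≤ (intLat (hullSum pt (fun _ => Set.univ) univ)).ncard + 1 := by
        gcongr
        rw [← Set.ncard_coe_finset, hT]
        exact Set.ncard_le_ncard_of_injOn _ (mapsTo_weightedSum hint) (injOn_weightedSum hω)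
          (finite_intLat_hullSum pt)

end LatticeWeights

section FullDimensional

lemma affineSpan_eq_top_of_adim_eq {n : ℕ} {P : Set (Fin n → ℝ)} (hP : P.Nonempty)
    (hdim : adim P = n) : affineSpan ℝ P = ⊤ :=
  (AffineSubspace.direction_eq_top_iff_of_nonempty (hP.affineSpan ℝ)).1 <|
    Submodule.eq_top_of_finrank_eq (hdim.trans (finrank_fin_fun ℝ).symm)

lemma exists_pairing_ne {n : ℕ} {X : Type*} [Nonempty X] {p : X → Fin n → ℝ}
    (hspan : affineSpan ℝ (Set.range p) = ⊤) {u : EuclideanSpace ℝ (Fin n)} (hu : u ≠ 0) :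
    ∃ x x', pairing n (p x) u ≠ pairing n (p x') u := by
  by_contra! hconst
  obtain ⟨x₀⟩ := ‹Nonempty X›
  have hle : affineSpan ℝ (Set.range p) ≤
      AffineSubspace.mk' (p x₀) (LinearMap.ker ((pairing n).flip u : (Fin n → ℝ) →ₗ[ℝ] ℝ)) := by
    rw [affineSpan_le]
    rintro _ ⟨x, rfl⟩
    simp [AffineSubspace.mem_mk', hconst x x₀]
  rw [hspan, top_le_iff] at hle
  have hker := congrArg AffineSubspace.direction hle
  rw [AffineSubspace.direction_mk', AffineSubspace.direction_top] at hker
  exact pairing_flip_ne_zero hu (LinearMap.ker_eq_top.1 hker)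

lemma interior_sum_nonempty {ι E : Type*} [AddCommGroup E] [TopologicalSpace E]
    [IsTopologicalAddGroup E] {I : Finset ι} (hI : I.Nonempty) {P : ι → Set E}
    (h : ∀ i, (interior (P i)).Nonempty) : (interior (∑ i ∈ I, P i)).Nonempty := by
  induction hI using Finset.Nonempty.cons_induction with
  | singleton i => simpa using h i
  | cons i I hi _ ih =>
    rw [sum_cons]
    exact ((h i).add (ih.mono interior_subset)).mono subset_interior_add_left

lemma interior_sum_univ_nonempty {n : ℕ} {P : Fin n → Set (Fin n → ℝ)}
    (h : ∀ i, (interior (P i)).Nonempty) : (interior (∑ i, P i)).Nonempty := by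
  rcases n.eq_zero_or_pos with rfl | hn
  · simp [Subsingleton.eq_univ_of_nonempty]
  · exact interior_sum_nonempty (univ_nonempty_iff.2 ⟨⟨0, hn⟩⟩) h

end FullDimensional

end Soprunov

/-- Soprunov's lower bound theorem. -/
theorem soprunov_lower_bound {n : ℕ}
    (P : Fin n → Set (Fin n → ℝ)) (hP : ∀ i, IsLatticePolytope (P i))
    (hdim : ∀ i, adim (P i) = n) :
    mixedVol P - 1 ≤ ((intLat (∑ i, P i)).ncard : ℝ) := by
  choose V hV hlat hPV using hP
  have hne : ∀ i, Nonempty (V i) := fun i => (hV i).to_subtype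
  let pt (i : Fin n) (x : ∀ i, V i) : Fin n → ℝ := x i
  have hrange (i) : Set.range (pt i) = V i :=
    ((Function.surjective_eval (β := fun i => V i) i).range_comp _).trans Subtype.range_coe
  have hsum (I) : Soprunov.hullSum pt (fun _ => Set.univ) I = ∑ i ∈ I, P i :=
    sum_congr rfl fun i _ => by rw [Set.image_univ, hrange, hPV]
  have hspan (i) : affineSpan ℝ (V i : Set (Fin n → ℝ)) = ⊤ := by
    rw [← affineSpan_convexHull, ← hPV]
    exact Soprunov.affineSpan_eq_top_of_adim_eq (by simpa [hPV] using hV i) (hdim i)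
  have hint : (interior (Soprunov.hullSum pt (fun _ => Set.univ) univ)).Nonempty := by
    rw [hsum]
    refine Soprunov.interior_sum_univ_nonempty fun i => ?_
    rw [hPV, interior_convexHull_nonempty_iff_affineSpan_eq_top, hspan]
  have hco (i) : ∀ u ≠ 0, ∃ x x', Soprunov.pairing n (pt i x) u ≠ Soprunov.pairing n (pt i x') u :=
    fun u hu => Soprunov.exists_pairing_ne ((hrange i).symm ▸ hspan i) hu
  simpa only [mixedVol, hsum] using Soprunov.sum_neg_one_pow_mul_volume_hullSum_sub_one_le
    (fun i x => hlat i _ (x i).2) hco hint
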